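/- Let L be a smooth operator field on ℝ⁴ such that at every point x the matrix L(x) has a single real eigenvalue of geometric multiplicity one (i.e. there exists λ ∈ ℝ with (L(x) − λ·I)⁴ = 0 after subtracting the eigenvalue, more precisely the characteristic polynomial of L(x) is (t − λ)⁴ and rank(L(x) − λ·I) = 3). Set L̂ = L − (trace L / 4)·I and define the tensor field T(ξ,η) = L̂·H_L(L̂ξ, η) − L̂·H_L(ξ, L̂η) + H_L(L̂²ξ, η), where H_L = T^{(2)}_L is the Haantjes torsion of L (in index form T^i_{jk} = L̂^i_s H^s_{rk} L̂^r_j − L̂^i_s H^s_{jr} L̂^r_k + H^i_{sk} L̂^s_r L̂^r_j). Then L is locally reducible to upper triangular form near every point if and only if T(ξ,η)(x) = 0 for all smooth vector fields ξ, η and all x. -/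

import Mathlib

open Matrix

/-- A vector field on ℝⁿ. -/
abbrev Vec (n : ℕ) := Fin n → ℝ
abbrev VF (n : ℕ) := Vec n → Vec n
abbrev OpField (n : ℕ) := Vec n → Matrix (Fin n) (Fin n) ℝ

/-- Smooth (C^∞) vector field. -/
def SmoothVF {n : ℕ} (ξ : VF n) : Prop := ContDiff ℝ (⊤ : ℕ∞) ξ

/-- Smooth (C^∞) operator field, entrywise. -/
def SmoothOp {n : ℕ} (L : OpField n) : Prop :=
  ∀ i j : Fin n, ContDiff ℝ (⊤ : ℕ∞) fun x => L x i j

/-- Lie bracket of vector fields. -/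
noncomputable def lieB {n : ℕ} (ξ η : VF n) : VF n :=
  fun x => fderiv ℝ η x (ξ x) - fderiv ℝ ξ x (η x)

/-- Pointwise action of an operator field on a vector field. -/
def app {n : ℕ} (L : OpField n) (ξ : VF n) : VF n := fun x => (L x).mulVec (ξ x)

/-- Nijenhuis torsion. -/
noncomputable def nijTor {n : ℕ} (L : OpField n) (ξ η : VF n) : VF n :=
  app L (app L (lieB ξ η)) + lieB (app L ξ) (app L η)
    - app L (lieB (app L ξ) η) - app L (lieB ξ (app L η))

/-- Generalized Haantjes torsion: `genTor L m` is the torsion of level `m + 1`,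
so `genTor L 0` is the Nijenhuis torsion `T^{(1)}_L` and `genTor L (m-1) = T^{(m)}_L`. -/
noncomputable def genTor {n : ℕ} (L : OpField n) : ℕ → VF n → VF n → VF n
  | 0 => nijTor L
  | m + 1 => fun ξ η =>
      app L (app L (genTor L m ξ η)) + genTor L m (app L ξ) (app L η)
        - app L (genTor L m (app L ξ) η) - app L (genTor L m ξ (app L η))

/-- The Haantjes torsion `H_L = T^{(2)}_L`. -/
noncomputable def haantjes {n : ℕ} (L : OpField n) : VF n → VF n → VF n := genTor L 1

/-- Frölicher–Nijenhuis bracket of two operator fields. -/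
noncomputable def fnB {n : ℕ} (K L : OpField n) (ξ η : VF n) : VF n :=
  lieB (app K ξ) (app L η) + lieB (app L ξ) (app K η)
    - app L (lieB (app K ξ) η) - app L (lieB ξ (app K η))
    - app K (lieB (app L ξ) η) - app K (lieB ξ (app L η))
    + app L (app K (lieB ξ η)) + app K (app L (lieB ξ η))

/-- Generalized Haantjes bracket: `genB K L m` is the bracket of level `m + 1`,
so `genB K L 0 = [[K,L]]` and `genB K L (m-1) = H^{(m)}_{K,L}`. -/
noncomputable def genB {n : ℕ} (K L : OpField n) : ℕ → VF n → VF n → VF n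
  | 0 => fnB K L
  | m + 1 => fun ξ η =>
      app K (app L (genB K L m ξ η)) + genB K L m (app K ξ) (app L η)
        - app L (genB K L m (app K ξ) η) - app K (genB K L m ξ (app L η))
        + app L (app K (genB K L m ξ η)) + genB K L m (app L ξ) (app K η)
        - app K (genB K L m (app L ξ) η) - app L (genB K L m ξ (app K η))

/-- Upper triangular matrix. -/
def UpperTri {n : ℕ} (A : Matrix (Fin n) (Fin n) ℝ) : Prop :=
  ∀ i j : Fin n, j < i → A i j = 0

/-- Strictly upper triangular matrix. -/
def StrictUpperTri {n : ℕ} (A : Matrix (Fin n) (Fin n) ℝ) : Prop :=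
  ∀ i j : Fin n, j ≤ i → A i j = 0

/-- Jacobian matrix of a map `f : ℝⁿ → ℝⁿ` at a point. -/
noncomputable def jacobianMatrix {n : ℕ} (f : VF n) (x : Vec n) :
    Matrix (Fin n) (Fin n) ℝ :=
  Matrix.of fun i j => fderiv ℝ f x (Pi.single j 1) i

/-- `L` is locally reducible, near `p`, to a form whose matrix satisfies `P`
(e.g. upper triangularity) in suitable local coordinates: there are an open
neighbourhood `U` of `p` and a smooth diffeomorphism `φ` from `U` onto an open
set, with smooth inverse `ψ`, such that the pushforward operator field
`y ↦ Dφ(φ⁻¹ y) · L(φ⁻¹ y) · (Dφ(φ⁻¹ y))⁻¹ = Dφ(ψ y) · L(ψ y) · Dψ(y)`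
satisfies `P` at every point of `φ '' U`. -/
def LocallyReducible {n : ℕ} (L : OpField n) (p : Vec n)
    (P : Matrix (Fin n) (Fin n) ℝ → Prop) : Prop :=
  ∃ U : Set (Vec n), IsOpen U ∧ p ∈ U ∧
    ∃ φ ψ : VF n,
      ContDiffOn ℝ (⊤ : ℕ∞) φ U ∧ IsOpen (φ '' U) ∧
      ContDiffOn ℝ (⊤ : ℕ∞) ψ (φ '' U) ∧
      (∀ x ∈ U, ψ (φ x) = x) ∧ (∀ y ∈ φ '' U, φ (ψ y) = y) ∧
      ∀ y ∈ φ '' U, P (jacobianMatrix φ (ψ y) * L (ψ y) * jacobianMatrix ψ y)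

/-- The traceless part `L̂ = L - (trace L / 4) · 1` of an operator field in
dimension 4. -/
noncomputable def tracelessPart4 (L : OpField 4) : OpField 4 :=
  fun y => L y - ((L y).trace / 4) • (1 : Matrix (Fin 4) (Fin 4) ℝ)

/-- The tensor field `T(ξ,η) = L̂·H_L(L̂ξ, η) − L̂·H_L(ξ, L̂η) + H_L(L̂²ξ, η)`,
i.e. `T^i_{jk} = L̂^i_s H^s_{rk} L̂^r_j − L̂^i_s H^s_{jr} L̂^r_k + H^i_{sk} L̂^s_r L̂^r_j`. -/
noncomputable def Ttensor (L : OpField 4) (ξ η : VF 4) : VF 4 :=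
  app (tracelessPart4 L) (haantjes L (app (tracelessPart4 L) ξ) η)
    - app (tracelessPart4 L) (haantjes L ξ (app (tracelessPart4 L) η))
    + haantjes L (app (tracelessPart4 L) (app (tracelessPart4 L) ξ)) η

/-!
Let `N` be the traceless part of `L`; it is nilpotent with one-dimensional kernel, so near any given
point some constant vector `v` satisfies `N³ v ≠ 0`, and the vector fields `Y i = N ^ i v`,
`i = 0, …, 3`, form a frame there.

The Haantjes torsion is unchanged when a function times the identity is added to `L`, so `T` may be
computed from `N` alone. Evaluated on `Y i`, `Y j` it is a combination of `N ^ a [Y k, Y l]`, and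
solving the resulting linear system shows (`Ttensor_eq_zero_iff`) that `T = 0` at a point exactly when
`N³ [Y 1, Y 2] = 0`, `N³ [Y 1, Y 3] = 0` and `N² [Y 2, Y 3] = 0` there. As `ker N ^ k` is spanned by
`Y (4 - k), …, Y 3`, these conditions say that the distributions `ker N ⊆ ker N² ⊆ ker N³` are all
involutive.

If `L` is upper triangular in some coordinates, then `N` is strictly upper triangular in them, and
`ker N ^ k` is the span of the first `k` coordinate fields, hence involutive
(`LocallyReducible.pow_lieB_eq_zero`). Conversely, if the flag of kernels consists of involutive
distributions, the Frobenius theorem for a full flag (`IsFrameOn.straighten`) gives coordinates in which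
each `ker N ^ k` is spanned by the first `k` coordinate fields, and in these `L` is upper triangular
(`locallyReducible_of_Ttensor`).

For a frame `X 0, X 1, …` such that the span of each initial segment is involutive, the straightening
parametrisation is `(y₀, …, yₙ₋₁) ↦ Φ₀(y₀) ∘ ⋯ ∘ Φₙ₋₁(yₙ₋₁) (p)`, where `Φᵢ` is the flow of `X i`;
involutivity makes the flow of `X m` preserve the span of `X 0, …, X j` for `j ≥ m`. Joint smoothness of
the flows (`exists_smooth_flow`) follows from the implicit function theorem on the space of continuous
paths, applied to the integral equation `γ = x + t ∫ f ∘ γ`; for this, composition with a smooth map is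
shown to be a smooth operator on that space (`contDiff_superpos`).
-/

open Set Filter Topology
open scoped ContDiff unitInterval

/-! ### Superposition operators on path spaces -/

section Flow
variable {E F : Type} [NormedAddCommGroup E] [NormedAddCommGroup F]

/-- The superposition (Nemytskii) operator `g ↦ f ∘ g` on continuous paths over `[0,1]`. -/
def superpos (f : E → F) (hf : Continuous f) (g : C(I, E)) : C(I, F) :=
  ⟨fun s => f (g s), hf.comp g.continuous⟩

lemma continuous_superpos (f : E → F) (hf : Continuous f) : Continuous (superpos f hf) :=
  ContinuousMap.continuous_postcomp ⟨f, hf⟩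

variable [NormedSpace ℝ E] [NormedSpace ℝ F]

/-- The pointwise action of a path `A` of coefficients on a path `g` of vectors through a continuous
bilinear map `β`, as a continuous linear map in `A`. The coefficients live in an abstract normed
space `V` so that the topology of `C(I, V)` is the one coming from its norm. -/
noncomputable def pathApp {V : Type} [NormedAddCommGroup V] [NormedSpace ℝ V]
    (β : V →L[ℝ] E →L[ℝ] F) : C(I, V) →L[ℝ] (C(I, E) →L[ℝ] C(I, F)) :=
  LinearMap.mkContinuous₂
    (LinearMap.mk₂ ℝ
      (fun (A : C(I, V)) (g : C(I, E)) =>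
        (⟨fun s => β (A s) (g s), (β.continuous.comp A.continuous).clm_apply g.continuous⟩ :
          C(I, F)))
      (fun _ _ _ => by ext s; simp) (fun _ _ _ => by ext s; simp)
      (fun _ _ _ => by ext s; simp) (fun _ _ _ => by ext s; simp)) ‖β‖
    (fun A g => by
      rw [ContinuousMap.norm_le _ (by positivity)]
      intro s
      refine (β.le_opNorm₂ (A s) (g s)).trans ?_
      gcongr
      · exact A.norm_coe_le_norm s
      · exact g.norm_coe_le_norm s)

/-- The superposition operator of `f` is differentiable, with derivative the superposition operator of
the derivative of `f`. The derivative is written `β (f' x)` so that `f'` may take values in an abstract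
normed space. -/
lemma hasFDerivAt_superpos {V : Type} [NormedAddCommGroup V] [NormedSpace ℝ V]
    (β : V →L[ℝ] E →L[ℝ] F) (f : E → F) (hf : Continuous f) (f' : E → V)
    (hf' : Continuous f') (h : ∀ x, HasFDerivAt f (β (f' x)) x) (g : C(I, E)) :
    HasFDerivAt (superpos f hf) (pathApp β (superpos f' hf' g)) g := by
  rw [hasFDerivAt_iff_isLittleO_nhds_zero, Asymptotics.isLittleO_iff]
  intro c hc
  have hcont := (continuous_superpos (fun x => β (f' x))
    (β.continuous.comp hf')).continuousAt (x := g)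
  rw [Metric.continuousAt_iff] at hcont
  obtain ⟨δ, hδ, H⟩ := hcont c hc
  filter_upwards [Metric.ball_mem_nhds (0 : C(I, E)) hδ] with k hk
  rw [mem_ball_zero_iff] at hk
  rw [ContinuousMap.norm_le _ (by positivity)]
  intro s
  have hb : ∀ y ∈ segment ℝ (g s) (g s + k s), ‖β (f' y) - β (f' (g s))‖ ≤ c := by
    intro y hy
    rw [segment_eq_image'] at hy
    obtain ⟨t, ht, rfl⟩ := hy
    have h1 : dist (g + t • k) g < δ := by
      rw [dist_eq_norm, add_sub_cancel_left, norm_smul, Real.norm_eq_abs, abs_of_nonneg ht.1]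
      exact lt_of_le_of_lt (mul_le_of_le_one_left (norm_nonneg _) ht.2) hk
    have h2 := (ContinuousMap.dist_apply_le_dist (f := superpos (fun x => β (f' x))
      (β.continuous.comp hf') (g + t • k)) (g := superpos (fun x => β (f' x))
      (β.continuous.comp hf') g) s).trans (H h1).le
    rw [dist_eq_norm] at h2
    simpa [superpos] using h2
  have := Convex.norm_image_sub_le_of_norm_hasFDerivWithin_le'
    (f := f) (f' := fun x => β (f' x)) (φ := β (f' (g s))) (C := c) (s := segment ℝ (g s) (g s + k s))
    (x := g s) (y := g s + k s)
    (fun x _ => (h x).hasFDerivWithinAt) hb (convex_segment _ _) (left_mem_segment _ _ _)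
    (right_mem_segment _ _ _)
  rw [add_sub_cancel_left] at this
  exact this.trans (by gcongr; exact k.norm_coe_le_norm s)

/-- The superposition operator gains one order of differentiability over that of the derivative. -/
lemma contDiff_superpos_succ {V : Type} [NormedAddCommGroup V] [NormedSpace ℝ V]
    (β : V →L[ℝ] E →L[ℝ] F) (f : E → F) (hf : Continuous f) (f' : E → V)
    (hf' : Continuous f') (h : ∀ x, HasFDerivAt f (β (f' x)) x) (n : ℕ)
    (hn : ContDiff ℝ n (superpos f' hf')) : ContDiff ℝ (n + 1) (superpos f hf) :=
  contDiff_succ_iff_hasFDerivAt.2 ⟨fun g => pathApp β (superpos f' hf' g),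
    ContDiff.comp (g := fun A => pathApp β A) (by fun_prop) hn,
    hasFDerivAt_superpos β f hf f' hf' h⟩

/-- Taking `V = E →L[ℝ] F` and `β = id` in `contDiff_superpos_succ` gives the inductive step. -/
lemma contDiff_superpos_nat (n : ℕ) : ∀ {F : Type} [NormedAddCommGroup F] [NormedSpace ℝ F]
    (f : E → F) (hf : Continuous f), ContDiff ℝ n f → ContDiff ℝ n (superpos f hf) := by
  induction n with
  | zero =>
    intro F _ _ f hf _
    exact contDiff_zero.2 (continuous_superpos f hf)
  | succ n ih =>
    intro F _ _ f hf h
    obtain ⟨f', hf', hd⟩ := contDiff_succ_iff_hasFDerivAt.1 h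
    exact contDiff_superpos_succ (ContinuousLinearMap.id ℝ _) f hf f' hf'.continuous hd n
      (ih f' hf'.continuous hf')

lemma contDiff_superpos (f : E → F) (hf : ContDiff ℝ ∞ f) :
    ContDiff ℝ ∞ (superpos f hf.continuous) :=
  contDiff_infty.2 fun n => contDiff_superpos_nat n f _ (contDiff_infty.1 hf n)

/-- Integration `g ↦ (s ↦ ∫₀ˢ g)` of continuous paths over `[0,1]`. -/
noncomputable def pathInt [CompleteSpace E] : C(I, E) →L[ℝ] C(I, E) :=
  LinearMap.mkContinuous
    { toFun := fun g => ⟨fun s => ∫ u in (0 : ℝ)..s, g (projIcc 0 1 zero_le_one u), by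
        have : Continuous fun u : ℝ => g (projIcc 0 1 zero_le_one u) :=
          g.continuous.comp continuous_projIcc
        exact (intervalIntegral.continuous_primitive
          (fun a b => this.intervalIntegrable a b) 0).comp continuous_subtype_val⟩
      map_add' := fun g h => by
        ext s
        have hi : ∀ g : C(I, E), Continuous fun u : ℝ => g (projIcc 0 1 zero_le_one u) :=
          fun g => g.continuous.comp continuous_projIcc
        exact intervalIntegral.integral_add ((hi g).intervalIntegrable _ _)
          ((hi h).intervalIntegrable _ _)
      map_smul' := fun c g => by
        ext s
        exact intervalIntegral.integral_smul c _ } 1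
    (fun g => by
      rw [ContinuousMap.norm_le _ (by positivity)]
      intro s
      have := intervalIntegral.norm_integral_le_of_norm_le_const (a := (0 : ℝ)) (b := s)
        (f := fun u => g (projIcc 0 1 zero_le_one u)) (C := ‖g‖)
        (fun u _ => g.norm_coe_le_norm _)
      refine this.trans ?_
      rw [sub_zero, abs_of_nonneg s.2.1, one_mul]
      exact mul_le_of_le_one_right (norm_nonneg _) s.2.2)

lemma pathInt_apply [CompleteSpace E] (g : C(I, E)) (s : I) :
    pathInt g s = ∫ u in (0 : ℝ)..s, g (projIcc 0 1 zero_le_one u) := rfl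

end Flow

/-! ### Smooth dependence of flows on initial conditions -/

section Flow2

/-- Inverse function theorem on an open set, for smooth maps. -/
lemma exists_smooth_local_inverse {A B : Type} [NormedAddCommGroup A] [NormedSpace ℝ A]
    [CompleteSpace A] [NormedAddCommGroup B] [NormedSpace ℝ B] (G : A → B) (V : Set A)
    (hV : IsOpen V) (hG : ContDiffOn ℝ ∞ G V) (a : A) (ha : a ∈ V) (e : A ≃L[ℝ] B)
    (he : HasFDerivAt G (e : A →L[ℝ] B) a) :
    ∃ (s : B → A) (U : Set A), IsOpen U ∧ a ∈ U ∧ U ⊆ V ∧ IsOpen (G '' U) ∧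
      ContDiffOn ℝ ∞ s (G '' U) ∧ ∀ x ∈ U, s (G x) = x := by
  have hat : ∀ x ∈ V, ContDiffAt ℝ ∞ G x := fun x hx => hG.contDiffAt (hV.mem_nhds hx)
  have hGa := hat a ha
  set f := hGa.toOpenPartialHomeomorph G he (by simp) with hf
  have hfG : ∀ x, f x = G x := fun x => rfl
  -- the points of `V` where the derivative is invertible form an open set
  have hO : IsOpen (V ∩ fderiv ℝ G ⁻¹' range ((↑) : (A ≃L[ℝ] B) → A →L[ℝ] B)) :=
    (hG.continuousOn_fderiv_of_isOpen hV (by simp)).isOpen_inter_preimage hV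
      ContinuousLinearEquiv.isOpen
  set U := f.source ∩ (V ∩ fderiv ℝ G ⁻¹' range ((↑) : (A ≃L[ℝ] B) → A →L[ℝ] B)) with hU
  have hUo : IsOpen U := f.open_source.inter hO
  have him : f '' U = G '' U := rfl
  have hleft : ∀ x ∈ U, f.symm (G x) = x := fun x hx => f.left_inv hx.1
  refine ⟨f.symm, U, hUo, ⟨hGa.mem_toOpenPartialHomeomorph_source he (by simp), ha, ?_⟩,
    fun x hx => hx.2.1, ?_, ?_, hleft⟩
  · exact ⟨e, he.fderiv.symm⟩
  · rw [← him]
    exact f.isOpen_image_of_subset_source hUo inter_subset_left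
  · rintro _ ⟨x, hx, rfl⟩
    obtain ⟨e', he'⟩ := hx.2.2
    have hd := ((hat x hx.2.1).differentiableAt (by simp)).hasFDerivAt
    refine (f.contDiffAt_symm (f₀' := e') (f.map_source hx.1) ?_ ?_).contDiffWithinAt
    · rw [f.left_inv hx.1, he']; exact hd
    · rw [f.left_inv hx.1]; exact hat x hx.2.1

/-- Smooth dependence of the solution `γ` of `γ = ι x + t • S γ` on `(t, x)`, for small `t`. -/
lemma exists_smooth_fixedPoint {C E : Type} [NormedAddCommGroup C] [NormedSpace ℝ C]
    [CompleteSpace C] [NormedAddCommGroup E] [NormedSpace ℝ E] [CompleteSpace E]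
    (ι : E →L[ℝ] C) (S : C → C) (hS : ContDiff ℝ ∞ S) (p : E) :
    ∃ (γ : ℝ × E → C) (W : Set (ℝ × E)), IsOpen W ∧ ((0 : ℝ), p) ∈ W ∧ ContDiffOn ℝ ∞ γ W ∧
      ∀ q ∈ W, γ q = ι q.2 + q.1 • S (γ q) := by
  let G : (ℝ × E) × C → (ℝ × E) × C := fun z => (z.1, z.2 - (ι z.1.2 + z.1.1 • S z.2))
  have hG : ContDiff ℝ ∞ G := by
    have := hS.comp (contDiff_snd (E := ℝ × E) (F := C) (𝕜 := ℝ) (n := ∞))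
    refine contDiff_fst.prodMk (contDiff_snd.sub ((ι.contDiff.comp
      (contDiff_snd.comp contDiff_fst)).add ((contDiff_fst.comp contDiff_fst).smul this)))
  let a : (ℝ × E) × C := ((0, p), ι p)
  let B : (ℝ × E) →L[ℝ] C := -(ι.comp (ContinuousLinearMap.snd ℝ ℝ E) +
    (ContinuousLinearMap.fst ℝ ℝ E).smulRight (S (ι p)))
  let e : ((ℝ × E) × C) ≃L[ℝ] (ℝ × E) × C :=
    (ContinuousLinearEquiv.refl ℝ (ℝ × E)).skewProd (ContinuousLinearEquiv.refl ℝ C) B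
  have he : HasFDerivAt G (e : ((ℝ × E) × C) →L[ℝ] (ℝ × E) × C) a := by
    have h1 : HasFDerivAt (fun z : (ℝ × E) × C => z.1)
      (ContinuousLinearMap.fst ℝ (ℝ × E) C) a := hasFDerivAt_fst
    have h2 : HasFDerivAt (fun z : (ℝ × E) × C => z.2)
      (ContinuousLinearMap.snd ℝ (ℝ × E) C) a := hasFDerivAt_snd
    have h3 := (ι.hasFDerivAt (x := a.1.2)).comp a h1.snd
    have h4 : HasFDerivAt (fun z : (ℝ × E) × C => S z.2) _ a :=
      ((hS.differentiable (by simp) a.2).hasFDerivAt).comp a h2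
    have h5 := h1.prodMk (h2.sub (h3.add (h1.fst.smul h4)))
    refine h5.congr_fderiv ?_
    ext1
    all_goals
      apply ContinuousLinearMap.ext
      intro x
      simp [e, B, a, sub_eq_add_neg]
  obtain ⟨s, U, hU, haU, -, hGU, hs, hl⟩ := exists_smooth_local_inverse G univ isOpen_univ
    hG.contDiffOn a (mem_univ _) e he
  have hGa : G a = ((0, p), 0) := by simp [G, a]
  refine ⟨fun q => (s (q, 0)).2, (fun q => (q, (0 : C))) ⁻¹' (G '' U),
    hGU.preimage (by fun_prop), ?_, ?_, ?_⟩
  · show ((0, p), (0 : C)) ∈ G '' U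
    rw [← hGa]
    exact mem_image_of_mem G haU
  · exact contDiff_snd.comp_contDiffOn (hs.comp
      (contDiff_id.prodMk contDiff_const).contDiffOn (fun q hq => hq))
  · rintro q ⟨z, hz, hzq⟩
    have hzq' : G z = (q, 0) := hzq
    have hsq : s (q, 0) = z := by rw [← hzq', hl z hz]
    have h1 : z.1 = q := congrArg Prod.fst hzq
    have h2 : z.2 - (ι z.1.2 + z.1.1 • S z.2) = 0 := congrArg Prod.snd hzq
    show (s (q, 0)).2 = ι q.2 + q.1 • S (s (q, 0)).2
    rw [hsq, ← h1]
    exact sub_eq_zero.1 h2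

/-- Local flow of a smooth vector field, smooth jointly in time and initial condition. The rescaled
integral curve `γ s = Φ (s t, x)`, `s ∈ [0,1]`, is the fixed point of `γ = x + t ∫ f ∘ γ`, to which
`exists_smooth_fixedPoint` applies. -/
theorem exists_smooth_flow {E : Type} [NormedAddCommGroup E] [NormedSpace ℝ E]
    [FiniteDimensional ℝ E] (f : E → E) (hf : ContDiff ℝ ∞ f) (p : E) :
    ∃ (Φ : ℝ × E → E) (U : Set (ℝ × E)), IsOpen U ∧ ((0 : ℝ), p) ∈ U ∧ ContDiffOn ℝ ∞ Φ U ∧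
      (∀ x, ((0 : ℝ), x) ∈ U → Φ (0, x) = x) ∧
      ∀ t x, (t, x) ∈ U → HasDerivAt (fun s => Φ (s, x)) (f (Φ (t, x))) t := by
  have : CompleteSpace E := FiniteDimensional.complete ℝ E
  let ι : E →L[ℝ] C(I, E) := LinearMap.mkContinuous
    { toFun := fun x => ContinuousMap.const I x
      map_add' := fun _ _ => rfl
      map_smul' := fun _ _ => rfl } 1
    (fun x => by
      rw [ContinuousMap.norm_le _ (by positivity)]
      intro s
      show ‖x‖ ≤ 1 * ‖x‖
      rw [one_mul])
  have hS : ContDiff ℝ ∞ (fun g : C(I, E) => pathInt (superpos f hf.continuous g)) :=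
    ContDiff.comp (g := fun g : C(I, E) => pathInt g) (by fun_prop) (contDiff_superpos f hf)
  obtain ⟨γ, W, hW, hpW, hγ, hfix⟩ := exists_smooth_fixedPoint ι _ hS p
  obtain ⟨r, hr, ε, hε, hPL⟩ :=
    ContDiffAt.exists_forall_mem_closedBall_exists_eq_forall_mem_Ioo_hasDerivAt
    (f := f) (x₀ := p) (hf.contDiffAt.of_le (by simp)) 0
  have hint : ∀ q ∈ W, ∀ s : I, γ q s = q.2 + q.1 • ∫ u in (0 : ℝ)..s,
      f (γ q (projIcc 0 1 zero_le_one u)) := fun q hq s =>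
    congrArg (fun g : C(I, E) => g s) (hfix q hq)
  let U := W ∩ Ioo (-ε) ε ×ˢ Metric.ball p r
  have hU : IsOpen U := hW.inter (isOpen_Ioo.prod Metric.isOpen_ball)
  -- the endpoint of the fixed point is the value at time `t` of the Picard-Lindelöf solution `α`
  have key : ∀ x ∈ Metric.ball p r, ∀ α : ℝ → E, α 0 = x →
      (∀ t ∈ Ioo (-ε) ε, HasDerivAt α (f (α t)) t) → ∀ t, (t, x) ∈ U → γ (t, x) 1 = α t := by
    intro x hx α hα0 hα t ht
    let g : ℝ → E := fun s => x + t • ∫ u in (0 : ℝ)..s, f (γ (t, x) (projIcc 0 1 zero_le_one u))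
    have hcont : Continuous fun u : ℝ => f (γ (t, x) (projIcc 0 1 zero_le_one u)) :=
      hf.continuous.comp ((γ (t, x)).continuous.comp continuous_projIcc)
    have hgγ : ∀ s (hs : s ∈ Icc (0 : ℝ) 1), g s = γ (t, x) ⟨s, hs⟩ := fun s hs =>
      (hint _ ht.1 ⟨s, hs⟩).symm
    have hgd : ∀ s ∈ Icc (0 : ℝ) 1, HasDerivAt g (t • f (g s)) s := by
      intro s hs
      have := ((intervalIntegral.integral_hasDerivAt_right (hcont.intervalIntegrable 0 s)
        (hcont.stronglyMeasurableAtFilter _ _) hcont.continuousAt).const_smul t).const_add x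
      rw [projIcc_of_mem zero_le_one hs, ← hgγ s hs] at this
      exact this
    let h : ℝ → E := fun s => α (t * s)
    have hhd : ∀ s ∈ Icc (0 : ℝ) 1, HasDerivAt h (t • f (h s)) s := by
      intro s hs
      have hts : t * s ∈ Ioo (-ε) ε := by
        have h1 := ht.2.1
        rw [mem_Ioo, ← abs_lt] at h1 ⊢
        rw [abs_mul, abs_of_nonneg hs.1]
        exact lt_of_le_of_lt (mul_le_of_le_one_right (abs_nonneg _) hs.2) h1
      have : HasDerivAt h ((t * 1) • f (α (t * s))) s :=
        (hα _ hts).scomp s ((hasDerivAt_id s).const_mul t)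
      rw [mul_one] at this
      exact this
    have hgc : ContinuousOn g (Icc 0 1) := fun s hs => (hgd s hs).continuousAt.continuousWithinAt
    have hhc : ContinuousOn h (Icc 0 1) := fun s hs => (hhd s hs).continuousAt.continuousWithinAt
    -- both curves stay in a common ball, on which `f` is Lipschitz
    obtain ⟨R, hR⟩ := ((isCompact_Icc.image_of_continuousOn hgc).union
      (isCompact_Icc.image_of_continuousOn hhc)).isBounded.subset_closedBall 0
    have hlip : ∃ K, LipschitzOnWith K (fun y => t • f y) (Metric.closedBall 0 R) := by
      obtain ⟨K, hK⟩ := (contDiff_const.smul (hf.of_le (by simp)) : ContDiff ℝ 1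
        (fun y => t • f y)).contDiffOn.exists_lipschitzOnWith one_ne_zero
          (convex_closedBall (0 : E) R) (isCompact_closedBall 0 R)
      exact ⟨K, hK⟩
    obtain ⟨K, hK⟩ := hlip
    have := ODE_solution_unique_of_mem_Icc_right (v := fun _ y => t • f y)
      (s := fun _ => Metric.closedBall 0 R) (K := K) (f := g) (g := h) (a := 0) (b := 1)
      (fun _ _ => hK) hgc (fun s hs => (hgd s ⟨hs.1, hs.2.le⟩).hasDerivWithinAt)
      (fun s hs => hR (Or.inl (mem_image_of_mem _ ⟨hs.1, hs.2.le⟩))) hhc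
      (fun s hs => (hhd s ⟨hs.1, hs.2.le⟩).hasDerivWithinAt)
      (fun s hs => hR (Or.inr (mem_image_of_mem _ ⟨hs.1, hs.2.le⟩)))
      (by simp [g, h, hα0])
    have h1 := this (right_mem_Icc.2 zero_le_one)
    rw [hgγ 1 (right_mem_Icc.2 zero_le_one)] at h1
    simpa [h] using h1
  have hPL' : ∀ x ∈ Metric.ball p r, ∃ α : ℝ → E, α 0 = x ∧
      ∀ t ∈ Ioo (-ε) ε, HasDerivAt α (f (α t)) t := by
    simpa using fun x hx => hPL x (Metric.ball_subset_closedBall hx)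
  refine ⟨fun q => γ q 1, U, hU, ⟨hpW, by simp [hε], by simp [hr]⟩, ?_, ?_, ?_⟩
  · have hev : ContDiff ℝ ∞ fun g : C(I, E) => g 1 := by
      have hb : IsBoundedLinearMap ℝ fun g : C(I, E) => g 1 :=
        ⟨⟨fun _ _ => rfl, fun _ _ => rfl⟩, 1, one_pos, fun g => by
          rw [one_mul]; exact g.norm_coe_le_norm 1⟩
      exact hb.contDiff
    exact hev.comp_contDiffOn (hγ.mono inter_subset_left)
  · intro x hx
    obtain ⟨α, h0, h1⟩ := hPL' x hx.2.2
    exact (key x hx.2.2 α h0 h1 0 hx).trans h0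
  · intro t x hx
    obtain ⟨α, h0, h1⟩ := hPL' x hx.2.2
    have hev : (fun s => γ (s, x) 1) =ᶠ[𝓝 t] α := by
      have : ∀ᶠ s in 𝓝 t, (s, x) ∈ U :=
        (show Continuous fun s : ℝ => (s, x) by fun_prop).continuousAt.eventually
          (hU.mem_nhds hx)
      filter_upwards [this] with s hs using key x hx.2.2 α h0 h1 s hs
    have := (h1 t hx.2.1).congr_of_eventuallyEq hev
    rwa [← key x hx.2.2 α h0 h1 t hx] at this

end Flow2

/-! ### Frobenius theorem for full flags -/

section Straighten

/-- The smooth vector fields `X` form a frame over the open set `O`, with dual coframe `F`: for `x ∈ O`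
the numbers `F x w j` are the coordinates of the vector `w` in the basis `X j x`. -/
structure IsFrameOn {n : ℕ} (X : Fin n → (Fin n → ℝ) → Fin n → ℝ)
    (F : (Fin n → ℝ) → (Fin n → ℝ) →L[ℝ] Fin n → ℝ) (O : Set (Fin n → ℝ)) : Prop where
  isOpen : IsOpen O
  smooth : ∀ j, ContDiff ℝ ∞ (X j)
  smooth_dual : ContDiffOn ℝ ∞ F O
  dual_apply : ∀ x ∈ O, ∀ j, F x (X j x) = Pi.single j 1
  sum_dual : ∀ x ∈ O, ∀ w, ∑ j, F x w j • X j x = w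

variable {n : ℕ} {X : Fin n → (Fin n → ℝ) → Fin n → ℝ}
  {F : (Fin n → ℝ) → (Fin n → ℝ) →L[ℝ] Fin n → ℝ} {O : Set (Fin n → ℝ)}

/-- Differentiating the coordinates of a vector transported by `Y` gives the brackets `[Y, X j]`.
The left-hand side is the derivative at time `0` of the coordinates of `a` under the flow of `Y`. -/
lemma IsFrameOn.fderiv_dual (h : IsFrameOn X F O) (Y : (Fin n → ℝ) → Fin n → ℝ)
    {z : Fin n → ℝ} (hz : z ∈ O) (a : Fin n → ℝ) :
    fderiv ℝ F z (Y z) a + F z (fderiv ℝ Y z a) =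
      -∑ j, F z a j • F z (fderiv ℝ (X j) z (Y z) - fderiv ℝ Y z (X j z)) := by
  have hF : HasFDerivAt F (fderiv ℝ F z) z :=
    ((h.smooth_dual.contDiffAt (h.isOpen.mem_nhds hz)).differentiableAt (by simp)).hasFDerivAt
  have hj : ∀ j, fderiv ℝ F z (Y z) (X j z) = -F z (fderiv ℝ (X j) z (Y z)) := by
    intro j
    have h1 := hF.clm_apply ((h.smooth j).differentiable (by simp) z).hasFDerivAt
    have h2 : HasFDerivAt (fun y => F y (X j y)) (0 : (Fin n → ℝ) →L[ℝ] Fin n → ℝ) z := by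
      refine (hasFDerivAt_const (Pi.single j (1 : ℝ)) z).congr_of_eventuallyEq ?_
      filter_upwards [h.isOpen.mem_nhds hz] with y hy using h.dual_apply y hy j
    have h3 := congrArg (fun A : (Fin n → ℝ) →L[ℝ] Fin n → ℝ => A (Y z)) (h1.unique h2)
    simp only [_root_.add_apply, ContinuousLinearMap.comp_apply,
      ContinuousLinearMap.flip_apply, _root_.zero_apply] at h3
    exact eq_neg_of_add_eq_zero_right h3
  conv_lhs => rw [← h.sum_dual z hz a]
  simp only [map_sum, map_smul, hj, map_sub, smul_neg, smul_sub, Finset.sum_neg_distrib,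
    Finset.sum_sub_distrib]
  abel

/-- The variational equation: the spatial derivative of a flow solves the linearised equation. -/
lemma hasDerivAt_fderiv_flow {E : Type} [NormedAddCommGroup E] [NormedSpace ℝ E]
    {Y : E → E} (hY : ContDiff ℝ ∞ Y) {Φ : ℝ × E → E} {U : Set (ℝ × E)} (hU : IsOpen U)
    (hΦ : ContDiffOn ℝ ∞ Φ U)
    (hflow : ∀ t x, (t, x) ∈ U → HasDerivAt (fun s => Φ (s, x)) (Y (Φ (t, x))) t)
    {t : ℝ} {x : E} (h : (t, x) ∈ U) (w : E) :
    HasDerivAt (fun s => fderiv ℝ Φ (s, x) (0, w))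
      (fderiv ℝ Y (Φ (t, x)) (fderiv ℝ Φ (t, x) (0, w))) t := by
  have hat : ∀ q ∈ U, HasFDerivAt Φ (fderiv ℝ Φ q) q := fun q hq =>
    ((hΦ.contDiffAt (hU.mem_nhds hq)).differentiableAt (by simp)).hasFDerivAt
  have hl : ∀ q : ℝ × E, HasDerivAt (fun s : ℝ => (s, q.2)) ((1 : ℝ), (0 : E)) q.1 := fun q =>
    (hasDerivAt_id q.1).prodMk (hasDerivAt_const q.1 q.2)
  have hdt : ∀ q ∈ U, fderiv ℝ Φ q (1, 0) = Y (Φ q) := fun q hq =>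
    ((hat q hq).comp_hasDerivAt q.1 (hl q)).unique (hflow q.1 q.2 hq)
  have hD : HasFDerivAt (fderiv ℝ Φ) (fderiv ℝ (fderiv ℝ Φ) (t, x)) (t, x) :=
    (((hΦ.fderiv_of_isOpen hU (m := ∞) (by simp)).contDiffAt
      (hU.mem_nhds h)).differentiableAt (by simp)).hasFDerivAt
  have h0 : HasDerivAt (fun s => fderiv ℝ Φ (s, x)) (fderiv ℝ (fderiv ℝ Φ) (t, x) (1, 0)) t :=
    hD.comp_hasDerivAt t (hl (t, x))
  have h1 : HasDerivAt (fun s => fderiv ℝ Φ (s, x) (0, w))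
      (fderiv ℝ (fderiv ℝ Φ) (t, x) (1, 0) (0, w) + fderiv ℝ Φ (t, x) 0) t :=
    h0.clm_apply (hasDerivAt_const t ((0 : ℝ), w))
  have h2 := hD.clm_apply (hasFDerivAt_const ((1 : ℝ), (0 : E)) (t, x))
  have h3 : HasFDerivAt (fun q => fderiv ℝ Φ q (1, 0))
      ((fderiv ℝ Y (Φ (t, x))).comp (fderiv ℝ Φ (t, x))) (t, x) :=
    (((hY.differentiable (by simp) (Φ (t, x))).hasFDerivAt).comp (t, x)
      (hat _ h)).congr_of_eventuallyEq (by
        filter_upwards [hU.mem_nhds h] with q hq using hdt q hq)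
  have h4 : fderiv ℝ (fderiv ℝ Φ) (t, x) (0, w) (1, 0) =
      fderiv ℝ Y (Φ (t, x)) (fderiv ℝ Φ (t, x) (0, w)) := by
    have := congrArg (fun A : (ℝ × E) →L[ℝ] E => A (0, w)) (h2.unique h3)
    simpa using this
  have hsymm : IsSymmSndFDerivAt ℝ Φ (t, x) :=
    (hΦ.contDiffAt (hU.mem_nhds h)).isSymmSndFDerivAt (by
      rw [minSmoothness_of_isRCLikeNormedField]
      exact WithTop.coe_le_coe.2 (le_top (a := (2 : ℕ∞))))
  rw [map_zero, add_zero, hsymm (1, 0) (0, w), h4] at h1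
  exact h1

/-- If the brackets of `Y` with the first `k` fields of the frame have no components of index
`≥ k`, then the flow of `Y` maps the span of those fields to itself: along an integral curve the
components of index `≥ k` of a transported vector solve a homogeneous linear equation. -/
lemma IsFrameOn.flow_invariant (h : IsFrameOn X F O) {Y : (Fin n → ℝ) → Fin n → ℝ}
    (hY : ContDiff ℝ ∞ Y) (k : ℕ)
    (hinv : ∀ z ∈ O, ∀ j r : Fin n, (j : ℕ) < k → k ≤ r →
      F z (fderiv ℝ (X j) z (Y z) - fderiv ℝ Y z (X j z)) r = 0)
    {Φ : ℝ × (Fin n → ℝ) → Fin n → ℝ} {U : Set (ℝ × (Fin n → ℝ))} (hU : IsOpen U)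
    (hΦ : ContDiffOn ℝ ∞ Φ U)
    (hflow : ∀ t x, (t, x) ∈ U → HasDerivAt (fun s => Φ (s, x)) (Y (Φ (t, x))) t)
    {t : ℝ} {x : Fin n → ℝ} (hseg : ∀ s ∈ Icc (0 : ℝ) 1, (s * t, x) ∈ U ∧ Φ (s * t, x) ∈ O)
    (w : Fin n → ℝ) (hw : ∀ r : Fin n, k ≤ r → F (Φ (0, x)) (fderiv ℝ Φ (0, x) (0, w)) r = 0)
    (r : Fin n) (hr : k ≤ r) : F (Φ (t, x)) (fderiv ℝ Φ (t, x) (0, w)) r = 0 := by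
  let A : ℝ → Fin n → ℝ := fun s => fderiv ℝ Φ (s * t, x) (0, w)
  let β : ℝ → Fin n → ℝ := fun s => Φ (s * t, x)
  let c : ℝ → Fin n → ℝ := fun s => F (β s) (A s)
  let H : ℝ → Fin n → Fin n → ℝ := fun s j =>
    F (β s) (fderiv ℝ (X j) (β s) (Y (β s)) - fderiv ℝ Y (β s) (X j (β s)))
  have hmul : ∀ s : ℝ, HasDerivAt (fun s : ℝ => s * t) t s := fun s => by
    simpa using (hasDerivAt_id s).mul_const t
  have hβ : ∀ s ∈ Icc (0 : ℝ) 1, HasDerivAt β (t • Y (β s)) s := fun s hs =>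
    HasDerivAt.scomp (g₁ := fun s => Φ (s, x)) (h := fun s => s * t) s
      (hflow _ _ (hseg s hs).1) (hmul s)
  have hA : ∀ s ∈ Icc (0 : ℝ) 1, HasDerivAt A (t • fderiv ℝ Y (β s) (A s)) s := fun s hs =>
    HasDerivAt.scomp (g₁ := fun s => fderiv ℝ Φ (s, x) (0, w)) (h := fun s => s * t) s
      (hasDerivAt_fderiv_flow hY hU hΦ hflow (hseg s hs).1 w) (hmul s)
  have hc : ∀ s ∈ Icc (0 : ℝ) 1, HasDerivAt c (-(t • ∑ j, c s j • H s j)) s := by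
    intro s hs
    have hF : HasFDerivAt F (fderiv ℝ F (β s)) (β s) :=
      ((h.smooth_dual.contDiffAt (h.isOpen.mem_nhds (hseg s hs).2)).differentiableAt
        (by simp)).hasFDerivAt
    refine ((hF.comp_hasDerivAt s (hβ s hs)).clm_apply (hA s hs)).congr_deriv ?_
    have := h.fderiv_dual Y (hseg s hs).2 (A s)
    rw [← smul_neg, ← this, map_smul, map_smul, _root_.smul_apply, smul_add]
    rfl
  have hHc : ContinuousOn (fun s => ∑ j, ‖H s j‖) (Icc 0 1) := by
    have hβc : ContinuousOn β (Icc 0 1) := fun s hs =>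
      (hβ s hs).continuousAt.continuousWithinAt
    have hFc : ContinuousOn (fun s => F (β s)) (Icc 0 1) :=
      h.smooth_dual.continuousOn.comp hβc fun s hs => (hseg s hs).2
    have hX : ∀ j, Continuous (X j) := fun j => (h.smooth j).continuous
    have hXd : ∀ j, Continuous (fderiv ℝ (X j)) := fun j =>
      (h.smooth j).continuous_fderiv (by simp)
    have hYd : Continuous (fderiv ℝ Y) := hY.continuous_fderiv (by simp)
    have hYc := hY.continuous
    refine continuousOn_finsetSum _ fun j _ => ContinuousOn.norm ?_
    refine hFc.clm_apply (ContinuousOn.sub ?_ ?_)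
    · exact ((hXd j).comp_continuousOn hβc).clm_apply (hYc.comp_continuousOn hβc)
    · exact (hYd.comp_continuousOn hβc).clm_apply ((hX j).comp_continuousOn hβc)
  obtain ⟨K, hK⟩ := isCompact_Icc.exists_bound_of_continuousOn hHc
  -- `Q` discards the components of index `< k`
  let Q : (Fin n → ℝ) →L[ℝ] Fin n → ℝ := ContinuousLinearMap.pi fun r =>
    if k ≤ (r : ℕ) then ContinuousLinearMap.proj r else 0
  have hQ : ∀ u r, Q u r = if k ≤ (r : ℕ) then u r else 0 := by
    intro u r
    simp only [Q, ContinuousLinearMap.pi_apply]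
    split_ifs <;> rfl
  have hzero := eq_zero_of_abs_deriv_le_mul_abs_self_of_eq_zero_right (f := fun s => Q (c s))
    (f' := fun s => Q (-(t • ∑ j, c s j • H s j))) (K := |t| * K) (a := 0) (b := 1)
    (fun s hs => (Q.continuous.continuousAt.comp (hc s hs).continuousAt).continuousWithinAt)
    (fun s hs => (Q.hasFDerivAt.comp_hasDerivAt s (hc s ⟨hs.1, hs.2.le⟩)).hasDerivWithinAt)
    (by
      ext r
      rw [hQ]
      split_ifs with hkr
      · simpa [c, β, A] using hw r hkr
      · rfl)
    (by
      intro s hs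
      have hs' : s ∈ Icc (0 : ℝ) 1 := ⟨hs.1, hs.2.le⟩
      have hKs := hK s hs'
      rw [Real.norm_of_nonneg (Finset.sum_nonneg fun _ _ => norm_nonneg _)] at hKs
      rw [mul_assoc, pi_norm_le_iff_of_nonneg (mul_nonneg (abs_nonneg _) (mul_nonneg
        ((Finset.sum_nonneg fun _ _ => norm_nonneg _).trans hKs) (norm_nonneg _)))]
      intro r
      rw [hQ]
      split_ifs with hkr
      · rw [Pi.neg_apply, norm_neg, Pi.smul_apply, smul_eq_mul, norm_mul, Real.norm_eq_abs t]
        refine mul_le_mul_of_nonneg_left ?_ (abs_nonneg t)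
        rw [Finset.sum_apply]
        refine (norm_sum_le _ _).trans ?_
        refine le_trans ?_ (mul_le_mul_of_nonneg_right hKs (norm_nonneg _))
        rw [Finset.sum_mul]
        refine Finset.sum_le_sum fun j _ => ?_
        rw [Pi.smul_apply, smul_eq_mul, norm_mul, mul_comm]
        by_cases hj : (j : ℕ) < k
        · have : H s j r = 0 := hinv _ (hseg s hs').2 j r hj hkr
          rw [this, norm_zero, zero_mul]
          positivity
        · have h1 : ‖c s j‖ ≤ ‖Q (c s)‖ := by
            have := norm_le_pi_norm (Q (c s)) j
            rwa [hQ, if_pos (not_lt.1 hj)] at this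
          exact mul_le_mul (norm_le_pi_norm _ _) h1 (norm_nonneg _) (norm_nonneg _)
      · rw [norm_zero]
        exact mul_nonneg (abs_nonneg _) (mul_nonneg
          ((Finset.sum_nonneg fun _ _ => norm_nonneg _).trans hKs) (norm_nonneg _)))
    1 (right_mem_Icc.2 zero_le_one)
  have := congrFun hzero r
  rw [hQ, if_pos hr] at this
  simpa [c, β, A] using this

/-- A map germ `g` at `0` with `g 0 = p` whose `j`-th partial derivative takes values in the span of
`X 0, …, X j`, vanishes for `j < m`, and is `X j p` at the origin for `j ≥ m`. -/
def StraightFrom (X : Fin n → (Fin n → ℝ) → Fin n → ℝ)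
    (F : (Fin n → ℝ) → (Fin n → ℝ) →L[ℝ] Fin n → ℝ) (O : Set (Fin n → ℝ)) (p : Fin n → ℝ)
    (m : ℕ) : Prop :=
  ∃ (g : (Fin n → ℝ) → Fin n → ℝ) (W : Set (Fin n → ℝ)), IsOpen W ∧ 0 ∈ W ∧
    ContDiffOn ℝ ∞ g W ∧ g 0 = p ∧ (∀ y ∈ W, g y ∈ O) ∧
    (∀ y ∈ W, ∀ j : Fin n, (j : ℕ) < m → fderiv ℝ g y (Pi.single j 1) = 0) ∧
    (∀ y ∈ W, ∀ j r : Fin n, j < r → F (g y) (fderiv ℝ g y (Pi.single j 1)) r = 0) ∧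
    ∀ j : Fin n, m ≤ j → fderiv ℝ g 0 (Pi.single j 1) = X j p

/-- If `g` is a germ for `m + 1` and `Φ` is the flow of `X m`, then `y ↦ Φ (y m, g y)` is a germ
for `m`. -/
lemma IsFrameOn.straightFrom_step (h : IsFrameOn X F O)
    (hinv : ∀ z ∈ O, ∀ i j r : Fin n, i < r → j < r →
      F z (fderiv ℝ (X j) z (X i z) - fderiv ℝ (X i) z (X j z)) r = 0)
    {p : Fin n → ℝ} (m : ℕ) (hm : m < n) (hS : StraightFrom X F O p (m + 1)) :
    StraightFrom X F O p m := by
  obtain ⟨g, W, hW, h0W, hg, hg0, hgO, hgz, hgF, hgX⟩ := hS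
  let i : Fin n := ⟨m, hm⟩
  obtain ⟨Φ, U, hU, hpU, hΦ, hΦ0, hflow⟩ := exists_smooth_flow (X i) (h.smooth i) p
  have hpO : p ∈ O := hg0 ▸ hgO 0 h0W
  have hUO : IsOpen (U ∩ Φ ⁻¹' O) := hΦ.continuousOn.isOpen_inter_preimage hU h.isOpen
  obtain ⟨ε, hε, hball⟩ := Metric.isOpen_iff.1 hUO (0, p)
    ⟨hpU, by rw [mem_preimage, hΦ0 p hpU]; exact hpO⟩
  let κ : (Fin n → ℝ) → ℝ × (Fin n → ℝ) := fun y => (y i, g y)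
  have hκ : ContDiffOn ℝ ∞ κ W := (contDiff_apply ℝ ℝ i).contDiffOn.prodMk hg
  have hΦat : ∀ q ∈ U, HasFDerivAt Φ (fderiv ℝ Φ q) q := fun q hq =>
    ((hΦ.contDiffAt (hU.mem_nhds hq)).differentiableAt (by simp)).hasFDerivAt
  have hgat : ∀ y ∈ W, HasFDerivAt g (fderiv ℝ g y) y := fun y hy =>
    ((hg.contDiffAt (hW.mem_nhds hy)).differentiableAt (by simp)).hasFDerivAt
  -- the derivatives of the flow in the time direction, and in the space directions at time `0`
  have hdt : ∀ q ∈ U, fderiv ℝ Φ q (1, 0) = X i (Φ q) := fun q hq =>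
    ((hΦat q hq).comp_hasDerivAt q.1
      ((hasDerivAt_id q.1).prodMk (hasDerivAt_const q.1 q.2))).unique (hflow q.1 q.2 hq)
  have hdx : ∀ x w, ((0 : ℝ), x) ∈ U → fderiv ℝ Φ (0, x) (0, w) = w := by
    intro x w hx
    have h1 : HasFDerivAt (fun x => Φ (0, x)) _ x :=
      (hΦat _ hx).comp x ((hasFDerivAt_const (0 : ℝ) x).prodMk (hasFDerivAt_id x))
    have h2 : HasFDerivAt (fun x => Φ (0, x)) (ContinuousLinearMap.id ℝ (Fin n → ℝ)) x := by
      refine (hasFDerivAt_id x).congr_of_eventuallyEq ?_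
      have : ∀ᶠ y in 𝓝 x, ((0 : ℝ), y) ∈ U :=
        (show Continuous fun y : Fin n → ℝ => ((0 : ℝ), y) by fun_prop).continuousAt.eventually
          (hU.mem_nhds hx)
      filter_upwards [this] with y hy using hΦ0 y hy
    simpa using congrArg (fun A : (Fin n → ℝ) →L[ℝ] Fin n → ℝ => A w) (h1.unique h2)
  let W' := W ∩ κ ⁻¹' Metric.ball (0, p) ε
  have hκU : ∀ y ∈ W', κ y ∈ U ∩ Φ ⁻¹' O := fun y hy => hball hy.2
  have hder : ∀ y ∈ W', ∀ j : Fin n, fderiv ℝ (fun y => Φ (κ y)) y (Pi.single j 1) =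
      fderiv ℝ Φ (κ y) ((Pi.single j 1 : Fin n → ℝ) i, fderiv ℝ g y (Pi.single j 1)) := by
    intro y hy j
    have h1 : HasFDerivAt (fun y => Φ (κ y)) _ y :=
      (hΦat _ (hκU y hy).1).comp y ((hasFDerivAt_apply i y).prodMk (hgat y hy.1))
    rw [h1.fderiv]
    rfl
  have h0W' : 0 ∈ W' := ⟨h0W, by simp [κ, hg0, hε]⟩
  have hκ0 : κ 0 = (0, p) := by simp [κ, hg0]
  have hne : ∀ j : Fin n, (j : ℕ) ≠ m → (Pi.single j (1 : ℝ) : Fin n → ℝ) i = 0 := fun j hj =>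
    Pi.single_eq_of_ne (fun hij => hj (by rw [← hij])) _
  refine ⟨fun y => Φ (κ y), W', hκ.continuousOn.isOpen_inter_preimage hW Metric.isOpen_ball, h0W',
    hΦ.comp (hκ.mono inter_subset_left) fun y hy => (hκU y hy).1, ?_, fun y hy => (hκU y hy).2,
    ?_, ?_, ?_⟩
  · show Φ (κ 0) = p
    rw [hκ0, hΦ0 p hpU]
  · intro y hy j hj
    rw [hder y hy j, hgz y hy.1 j (hj.trans (Nat.lt_succ_self m)), hne j hj.ne]
    exact map_zero _
  · intro y hy j r hjr
    show F (Φ (κ y)) (fderiv ℝ (fun y => Φ (κ y)) y (Pi.single j 1)) r = 0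
    rw [hder y hy j]
    rcases lt_trichotomy (j : ℕ) m with hj | hj | hj
    · rw [hgz y hy.1 j (hj.trans (Nat.lt_succ_self m)), hne j hj.ne]
      have : fderiv ℝ Φ (κ y) (0, 0) = 0 := map_zero _
      rw [this, map_zero, Pi.zero_apply]
    · have hji : j = i := Fin.ext hj
      subst hji
      rw [hgz y hy.1 i (Nat.lt_succ_self m), Pi.single_eq_same, hdt _ (hκU y hy).1,
        h.dual_apply _ (hκU y hy).2, Pi.single_eq_of_ne hjr.ne']
    · rw [hne j hj.ne']
      have hseg : ∀ s ∈ Icc (0 : ℝ) 1, (s * y i, g y) ∈ U ∩ Φ ⁻¹' O := by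
        intro s hs
        apply hball
        have h1 := hy.2
        simp only [κ, mem_preimage, Metric.mem_ball, Prod.dist_eq, sup_lt_iff, dist_zero_right,
          Real.norm_eq_abs, abs_mul] at h1 ⊢
        rw [abs_of_nonneg hs.1]
        exact ⟨lt_of_le_of_lt (mul_le_of_le_one_left (abs_nonneg _) hs.2) h1.1, h1.2⟩
      have h00 : ((0 : ℝ), g y) ∈ U := by
        simpa using (hseg 0 (left_mem_Icc.2 zero_le_one)).1
      refine h.flow_invariant (h.smooth i) (j + 1) ?_ hU hΦ hflow hseg _ ?_ r hjr
      · intro z hz l r hl hr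
        have hjr' : j < r := hr
        exact hinv z hz i l r (lt_trans hj hjr') (lt_of_le_of_lt (Nat.lt_succ_iff.1 hl) hjr')
      · intro r hr
        rw [hdx _ _ h00, hΦ0 _ h00]
        exact hgF y hy.1 j r hr
  · intro j hj
    rw [hder 0 h0W' j, hκ0]
    rcases hj.eq_or_lt with hj | hj
    · have hji : j = i := Fin.ext hj.symm
      subst hji
      rw [hgz 0 h0W i (Nat.lt_succ_self m), Pi.single_eq_same, hdt _ hpU, hΦ0 p hpU]
    · rw [hne j hj.ne', hdx _ _ hpU, hgX j hj]

/-- Frobenius theorem for a full flag: if each `X 0, …, X (r - 1)` is involutive, some smooth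
parametrisation straightens all these distributions simultaneously. -/
theorem IsFrameOn.straighten (h : IsFrameOn X F O)
    (hinv : ∀ z ∈ O, ∀ i j r : Fin n, i < r → j < r →
      F z (fderiv ℝ (X j) z (X i z) - fderiv ℝ (X i) z (X j z)) r = 0)
    {p : Fin n → ℝ} (hp : p ∈ O) : StraightFrom X F O p 0 := by
  have key : ∀ k ≤ n, StraightFrom X F O p (n - k) := by
    intro k
    induction k with
    | zero =>
      intro _
      refine ⟨fun _ => p, univ, isOpen_univ, mem_univ _, contDiffOn_const, rfl, fun _ _ => hp,
        fun _ _ _ _ => by simp, fun _ _ _ _ _ => by simp, fun j hj => ?_⟩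
      exact absurd j.2 (not_lt.2 hj)
    | succ k ih =>
      intro hk
      refine h.straightFrom_step hinv _ (by omega) ?_
      rw [show n - (k + 1) + 1 = n - k by omega]
      exact ih (by omega)
  simpa using key n le_rfl

end Straighten

/-! ### Torsion forms at a point -/

section Algebra

variable {V : Type} [AddCommGroup V] [Module ℝ V]

/-- The Nijenhuis torsion at a point of an operator field with value `A` and derivative `D`
(so that `D u w` is the derivative of the operator in the direction `u`, applied to `w`). -/
def nijForm (A : V →ₗ[ℝ] V) (D : V →ₗ[ℝ] V →ₗ[ℝ] V) : V →ₗ[ℝ] V →ₗ[ℝ] V :=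
  LinearMap.mk₂ ℝ (fun u w => D (A u) w - D (A w) u - A (D u w) + A (D w u))
    (fun _ _ _ => by simp only [map_add, LinearMap.add_apply]; abel)
    (fun _ _ _ => by simp only [map_smul, LinearMap.smul_apply]; module)
    (fun _ _ _ => by simp only [map_add, LinearMap.add_apply]; abel)
    (fun _ _ _ => by simp only [map_smul, LinearMap.smul_apply]; module)

/-- One step of the recursion defining the higher torsions, on bilinear forms at a point. -/
def haantjesStep (A : V →ₗ[ℝ] V) (S : V →ₗ[ℝ] V →ₗ[ℝ] V) : V →ₗ[ℝ] V →ₗ[ℝ] V :=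
  LinearMap.mk₂ ℝ (fun u w => A (A (S u w)) + S (A u) (A w) - A (S (A u) w) - A (S u (A w)))
    (fun _ _ _ => by simp only [map_add, LinearMap.add_apply]; abel)
    (fun _ _ _ => by simp only [map_smul, LinearMap.smul_apply]; module)
    (fun _ _ _ => by simp only [map_add]; abel)
    (fun _ _ _ => by simp only [map_smul]; module)

/-- The contraction with `N` that produces `Ttensor` from the Haantjes torsion, at a point. -/
def contractForm (N : V →ₗ[ℝ] V) (H : V →ₗ[ℝ] V →ₗ[ℝ] V) : V →ₗ[ℝ] V →ₗ[ℝ] V :=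
  LinearMap.mk₂ ℝ (fun u w => N (H (N u) w) - N (H u (N w)) + H (N (N u)) w)
    (fun _ _ _ => by simp only [map_add, LinearMap.add_apply]; abel)
    (fun _ _ _ => by simp only [map_smul, LinearMap.smul_apply]; module)
    (fun _ _ _ => by simp only [map_add]; abel)
    (fun _ _ _ => by simp only [map_smul]; module)

/-- The Haantjes torsion does not change when a multiple `c` of the identity, with derivative `dc`,
is added to the operator field. -/
lemma haantjesStep_add_smul (N : V →ₗ[ℝ] V) (D : V →ₗ[ℝ] V →ₗ[ℝ] V) (c : ℝ) (dc : V →ₗ[ℝ] ℝ)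
    (A : V →ₗ[ℝ] V) (DA : V →ₗ[ℝ] V →ₗ[ℝ] V) (hA : ∀ u, A u = N u + c • u)
    (hDA : ∀ u w, DA u w = D u w + dc u • w) :
    haantjesStep A (nijForm A DA) = haantjesStep N (nijForm N D) := by
  ext u w
  simp only [haantjesStep, nijForm, LinearMap.mk₂_apply, hA, hDA, map_add, map_sub, map_smul,
    LinearMap.add_apply, LinearMap.smul_apply, smul_add, smul_sub]
  module

section Cyclic
variable {N : V →ₗ[ℝ] V} {S : V →ₗ[ℝ] V →ₗ[ℝ] V} {Y : ℕ → V} {b : ℕ → ℕ → V}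

/-- The contracted torsion on the vectors `Y i = N ^ i v`, in terms of the brackets `b i j` of the
corresponding fields. -/
lemma contractForm_cyclic (hY : ∀ i, N (Y i) = Y (i + 1))
    (hS : ∀ i j, S (Y i) (Y j) =
      N (N (b i j)) + b (i + 1) (j + 1) - N (b (i + 1) j) - N (b i (j + 1)))
    (hN : ∀ u, N (N (N (N u))) = 0) (hb4 : ∀ i j, b (i + 4) j = 0) (i j : ℕ) :
    contractForm N (haantjesStep N S) (Y i) (Y j) =
      - (3 : ℝ) • N (N (N (b (i + 1) (j + 2)))) + N (N (N (b (i + 2) (j + 1))))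
      + N (N (b (i + 2) (j + 2)))
      - N (N (N (b (i + 3) j))) + (2 : ℝ) • N (N (b (i + 3) (j + 1))) - N (b (i + 3) (j + 2))
      - N (N (N (b i (j + 3)))) + (2 : ℝ) • N (N (b (i + 1) (j + 3))) - N (b (i + 2) (j + 3)) := by
  simp only [contractForm, haantjesStep, LinearMap.mk₂_apply, hY, hS, map_add, map_sub, hN,
    add_assoc, Nat.reduceAdd, hb4, map_zero]
  module

/-- The components `(0,0)`, `(1,0)` and `(0,1)` of the contracted torsion already give the three
conditions on the brackets; the remaining components follow from these. -/
lemma contractForm_cyclic_eq_zero_iff (hY : ∀ i, N (Y i) = Y (i + 1))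
    (hS : ∀ i j, S (Y i) (Y j) =
      N (N (b i j)) + b (i + 1) (j + 1) - N (b (i + 1) j) - N (b i (j + 1)))
    (hN : ∀ u, N (N (N (N u))) = 0) (hb : ∀ i j, b i j = - b j i)
    (hb4 : ∀ i j, b (i + 4) j = 0) :
    (∀ i < 4, ∀ j < 4, contractForm N (haantjesStep N S) (Y i) (Y j) = 0) ↔
      N (N (N (b 1 2))) = 0 ∧ N (N (N (b 1 3))) = 0 ∧ N (N (b 2 3)) = 0 := by
  have hbb : ∀ i, b i i = 0 := fun i => by
    have := hb i i
    rwa [eq_neg_iff_add_eq_zero, ← two_smul ℝ, smul_eq_zero_iff_right two_ne_zero] at this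
  have hb4' : ∀ i j, b i (j + 4) = 0 := fun i j => by rw [hb, hb4, neg_zero]
  have he : ∀ j, b 4 j = 0 := fun j => hb4 0 j
  have he' : ∀ i, b i 4 = 0 := fun i => hb4' i 0
  simp only [contractForm_cyclic hY hS hN hb4]
  constructor
  · intro h
    have h00 := h 0 (by norm_num) 0 (by norm_num)
    have h10 := h 1 (by norm_num) 0 (by norm_num)
    have h01 := h 0 (by norm_num) 1 (by norm_num)
    simp only [Nat.reduceAdd, zero_add, hbb, he, he', hb 2 1, hb 3 0, hb 3 1, hb 3 2, map_neg,
      map_zero] at h00 h10 h01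
    have e1 : (4 : ℝ) • N (N (N (b 1 2))) = 0 := by
      linear_combination (norm := module) (-1 : ℝ) • h00
    have e2 : (4 : ℝ) • N (N (N (b 1 3))) = 0 := by
      linear_combination (norm := module) (-1 : ℝ) • h10 + (-1 : ℝ) • h01
    have e3 : (2 : ℝ) • N (N (b 2 3)) = 0 := by
      linear_combination (norm := module) (1 : ℝ) • h10 + (-1 : ℝ) • h01
    simp only [smul_eq_zero, OfNat.ofNat_ne_zero, false_or] at e1 e2 e3
    exact ⟨e1, e2, e3⟩
  · rintro ⟨h12, h13, h23⟩ i hi j hj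
    interval_cases i <;> interval_cases j <;>
    · simp only [Nat.reduceAdd, zero_add, hbb, he, he', hb 2 1, hb 3 0, hb 3 1, hb 3 2, map_neg,
        map_zero, h12, h13, h23, hb4, hb4']
      try module
end Cyclic
end Algebra

/-! ### Tensoriality of the torsions and the traceless part -/

section Pointwise
variable {n : ℕ}

/-- The derivative of an operator field at `x`, as the bilinear map `(u, w) ↦ (∂ᵤ L) w`. -/
noncomputable def dOp (L : OpField n) (x : Vec n) : Vec n →ₗ[ℝ] Vec n →ₗ[ℝ] Vec n :=
  LinearMap.mk₂ ℝ (fun u w i => ∑ j, fderiv ℝ (fun y => L y i j) x u * w j)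
    (fun _ _ _ => by ext; simp [add_mul, Finset.sum_add_distrib])
    (fun _ _ _ => by ext; simp [mul_assoc, Finset.mul_sum])
    (fun _ _ _ => by ext; simp [mul_add, Finset.sum_add_distrib])
    (fun _ _ _ => by ext; simp [mul_left_comm, Finset.mul_sum])

lemma hasFDerivAt_app {L : OpField n} (hL : SmoothOp L) {ξ : VF n} {x : Vec n}
    (hξ : DifferentiableAt ℝ ξ x) :
    HasFDerivAt (app L ξ) (LinearMap.toContinuousLinearMap ((dOp L x).flip (ξ x) +
      (L x).mulVecLin.comp (fderiv ℝ ξ x).toLinearMap)) x := by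
  refine hasFDerivAt_pi'' fun i => ?_
  have h := HasFDerivAt.fun_sum (u := Finset.univ) fun j (_ : j ∈ Finset.univ) =>
    (((hL i j).differentiable (by simp) x).hasFDerivAt).mul
      ((hasFDerivAt_pi'.1 hξ.hasFDerivAt) j)
  refine h.congr_fderiv ?_
  ext u
  simp [dOp, Matrix.mulVec, dotProduct, Finset.sum_add_distrib, mul_comm, add_comm]

lemma fderiv_app {L : OpField n} (hL : SmoothOp L) {ξ : VF n} {x : Vec n}
    (hξ : DifferentiableAt ℝ ξ x) (u : Vec n) :
    fderiv ℝ (app L ξ) x u = dOp L x u (ξ x) + (L x).mulVecLin (fderiv ℝ ξ x u) := by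
  rw [(hasFDerivAt_app hL hξ).fderiv]
  rfl

lemma SmoothVF.differentiableAt {ξ : VF n} (hξ : SmoothVF ξ) (x : Vec n) :
    DifferentiableAt ℝ ξ x :=
  ContDiff.differentiable hξ (by simp) x

lemma SmoothVF.app {L : OpField n} (hL : SmoothOp L) {ξ : VF n} (hξ : SmoothVF ξ) :
    SmoothVF (app L ξ) := by
  refine contDiff_pi.2 fun i => ?_
  show ContDiff ℝ ∞ fun x => ∑ j, L x i j * ξ x j
  exact ContDiff.sum fun j _ => (hL i j).mul (contDiff_pi.1 hξ j)

lemma nijTor_apply {L : OpField n} (hL : SmoothOp L) {ξ η : VF n} (hξ : SmoothVF ξ)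
    (hη : SmoothVF η) (x : Vec n) :
    nijTor L ξ η x = nijForm (L x).mulVecLin (dOp L x) (ξ x) (η x) := by
  have hξ' := hξ.differentiableAt x
  have hη' := hη.differentiableAt x
  have e : ∀ (ζ : VF n) y, app L ζ y = (L y).mulVecLin (ζ y) := fun _ _ => rfl
  simp only [nijTor, lieB, nijForm, LinearMap.mk₂_apply, Pi.sub_apply, Pi.add_apply,
    fderiv_app hL hξ', fderiv_app hL hη', e, map_sub, map_add]
  abel

lemma haantjes_apply {L : OpField n} (hL : SmoothOp L) {ξ η : VF n} (hξ : SmoothVF ξ)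
    (hη : SmoothVF η) (x : Vec n) :
    haantjes L ξ η x =
      haantjesStep (L x).mulVecLin (nijForm (L x).mulVecLin (dOp L x)) (ξ x) (η x) := by
  have e : ∀ (ζ : VF n) y, app L ζ y = (L y).mulVecLin (ζ y) := fun _ _ => rfl
  simp only [haantjes, genTor, Pi.sub_apply, Pi.add_apply, e, haantjesStep, LinearMap.mk₂_apply,
    nijTor_apply hL hξ hη, nijTor_apply hL (hξ.app hL) hη, nijTor_apply hL hξ (hη.app hL),
    nijTor_apply hL (hξ.app hL) (hη.app hL)]

lemma SmoothOp.tracelessPart4 {L : OpField 4} (hL : SmoothOp L) :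
    SmoothOp (tracelessPart4 L) := by
  intro i j
  refine (hL i j).sub (ContDiff.mul ?_ contDiff_const)
  exact (ContDiff.sum fun k _ => hL k k).div_const 4

/-- `Ttensor` depends only on the values of its arguments at the point, and `L` may be replaced by its
traceless part in the Haantjes torsion. -/
lemma Ttensor_apply {L : OpField 4} (hL : SmoothOp L) {ξ η : VF 4} (hξ : SmoothVF ξ)
    (hη : SmoothVF η) (x : Vec 4) :
    Ttensor L ξ η x = contractForm (tracelessPart4 L x).mulVecLin
      (haantjesStep (tracelessPart4 L x).mulVecLin
        (nijForm (tracelessPart4 L x).mulVecLin (dOp (tracelessPart4 L) x))) (ξ x) (η x) := by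
  have hN := hL.tracelessPart4
  have e : ∀ (ζ : VF 4) y, app (tracelessPart4 L) ζ y = (tracelessPart4 L y).mulVecLin (ζ y) :=
    fun _ _ => rfl
  have htr : ContDiff ℝ ∞ fun y => (L y).trace / 4 :=
    (ContDiff.sum fun k _ => hL k k).div_const 4
  rw [← haantjesStep_add_smul (tracelessPart4 L x).mulVecLin (dOp (tracelessPart4 L) x)
    ((L x).trace / 4) (fderiv ℝ (fun y => (L y).trace / 4) x).toLinearMap (L x).mulVecLin (dOp L x)]
  · simp only [Ttensor, Pi.sub_apply, Pi.add_apply, e, contractForm, LinearMap.mk₂_apply,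
      haantjes_apply hL (hξ.app hN) hη, haantjes_apply hL hξ (hη.app hN),
      haantjes_apply hL ((hξ.app hN).app hN) hη]
  · intro u
    simp [tracelessPart4]
  · intro u w
    ext i
    have : ∀ j, fderiv ℝ (fun y => tracelessPart4 L y i j) x u = fderiv ℝ (fun y => L y i j) x u -
        fderiv ℝ (fun y => (L y).trace / 4) x u * (1 : Matrix (Fin 4) (Fin 4) ℝ) i j := by
      intro j
      have h1 := (((hL i j).differentiable (by simp) x).hasFDerivAt).sub
        (((htr.differentiable (by simp) x).hasFDerivAt).mul_const
          ((1 : Matrix (Fin 4) (Fin 4) ℝ) i j))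
      have h2 : fderiv ℝ (fun y => tracelessPart4 L y i j) x = _ := h1.fderiv
      rw [h2]
      simp [mul_comm]
    simp [dOp, this, sub_mul, Finset.sum_sub_distrib, Matrix.one_apply]

end Pointwise

section Jordan

lemma finrank_le_map_add_ker {V : Type} [AddCommGroup V] [Module ℝ V] [FiniteDimensional ℝ V]
    (f : V →ₗ[ℝ] V) (W : Submodule ℝ V) :
    Module.finrank ℝ W ≤ Module.finrank ℝ (W.map f) + Module.finrank ℝ (LinearMap.ker f) := by
  have h := LinearMap.finrank_range_add_finrank_ker (f.domRestrict W)
  rw [LinearMap.range_domRestrict] at h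
  rw [← h]
  refine Nat.add_le_add_left ?_ _
  rw [LinearMap.ker_domRestrict]
  exact LinearMap.finrank_le_finrank_of_injective (f := W.subtype.restrict (q := LinearMap.ker f)
    fun _ hx => hx) fun a b hab => by
      apply Subtype.ext
      apply Subtype.ext
      exact congrArg (fun z : LinearMap.ker f => (z : V)) hab

/-- The rank of the powers of a matrix of corank `1` drops by at most one at each step, so the cube of
a `4 × 4` matrix of rank `3` is nonzero. -/
lemma exists_cube_ne_zero (M : Matrix (Fin 4) (Fin 4) ℝ) (h : M.rank = 3) :
    ∃ v, M.mulVecLin (M.mulVecLin (M.mulVecLin v)) ≠ 0 := by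
  by_contra! hv
  set f := M.mulVecLin with hf
  have hr : Module.finrank ℝ (LinearMap.range f) = 3 := h
  have hk : Module.finrank ℝ (LinearMap.ker f) = 1 := by
    have := LinearMap.finrank_range_add_finrank_ker f
    rw [hr, Module.finrank_fin_fun] at this
    omega
  have h1 := finrank_le_map_add_ker f (LinearMap.range f)
  have h2 := finrank_le_map_add_ker f ((LinearMap.range f).map f)
  have h3 : ((LinearMap.range f).map f).map f = ⊥ := by
    rw [eq_bot_iff]
    rintro _ ⟨_, ⟨_, ⟨v, rfl⟩, rfl⟩, rfl⟩
    exact hv v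
  rw [h3, finrank_bot] at h2
  omega

lemma jordan_traceless {A : Matrix (Fin 4) (Fin 4) ℝ} {lam : ℝ}
    (hA : A.charpoly = (Polynomial.X - Polynomial.C lam) ^ 4) :
    A.trace / 4 = lam ∧ (A - lam • (1 : Matrix (Fin 4) (Fin 4) ℝ)) ^ 4 = 0 := by
  have h4 : (A - lam • (1 : Matrix (Fin 4) (Fin 4) ℝ)) ^ 4 = 0 := by
    have := A.aeval_self_charpoly
    rw [hA] at this
    simpa [Algebra.algebraMap_eq_smul_one] using this
  refine ⟨?_, h4⟩
  have := (Matrix.isNilpotent_trace_of_isNilpotent ⟨4, h4⟩).eq_zero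
  simp [Matrix.trace_sub, Matrix.trace_smul] at this
  linarith

end Jordan

/-! ### Cyclic vectors and the vanishing of the contracted torsion -/

section CyclicFrame

/-- In the basis `Y 3, Y 2, Y 1, Y 0` generated by a cyclic vector of a nilpotent `N`, a vector killed
by `N ^ r` has no components of index `≥ r`. -/
lemma cyclic_coord {V : Type} [AddCommGroup V] [Module ℝ V] {N : V →ₗ[ℝ] V} {Y : ℕ → V}
    (hY : ∀ i, N (Y i) = Y (i + 1)) (h4 : ∀ i, Y (i + 4) = 0) (h3 : Y 3 ≠ 0) (c : Fin 4 → ℝ)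
    (r : ℕ) (h : (N ^ r) (∑ j : Fin 4, c j • Y (3 - j)) = 0) (j : Fin 4) (hj : r ≤ j) :
    c j = 0 := by
  have hpow : ∀ k i, (N ^ k) (Y i) = Y (i + k) := by
    intro k
    induction k with
    | zero => intro i; rfl
    | succ k ih =>
      intro i
      rw [pow_succ', Module.End.mul_apply, ih, hY, add_assoc]
  have hup : ∀ k, r ≤ k → (N ^ k) (∑ j : Fin 4, c j • Y (3 - j)) = 0 := by
    intro k hk
    obtain ⟨l, rfl⟩ := Nat.exists_eq_add_of_le' hk
    rw [pow_add, Module.End.mul_apply, h, map_zero]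
  have e4 : Y 4 = 0 := h4 0
  have e5 : Y 5 = 0 := h4 1
  have e6 : Y 6 = 0 := h4 2
  have c3 : r ≤ 3 → c 3 = 0 := fun hr => by
    simpa [Fin.sum_univ_four, hpow, h3, e4, e5, e6] using hup 3 hr
  have c2 : r ≤ 2 → c 2 = 0 := fun hr => by
    simpa [Fin.sum_univ_four, hpow, h3, e4, e5, c3 (by omega)] using hup 2 hr
  have c1 : r ≤ 1 → c 1 = 0 := fun hr => by
    simpa [Fin.sum_univ_four, hpow, hY, h3, e4, c3 (by omega), c2 (by omega)] using hup 1 hr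
  have c0 : r ≤ 0 → c 0 = 0 := fun hr => by
    simpa [Fin.sum_univ_four, hpow, h3, c3 (by omega), c2 (by omega), c1 (by omega)] using hup 0 hr
  fin_cases j
  exacts [c0 hj, c1 hj, c2 hj, c3 hj]

/-- The vector fields `v, N v, N² v, …` generated by a constant vector `v`. -/
def krylov {n : ℕ} (N : OpField n) (v : Vec n) : ℕ → VF n
  | 0 => fun _ => v
  | i + 1 => app N (krylov N v i)

lemma krylov_succ {n : ℕ} (N : OpField n) (v : Vec n) (i : ℕ) (x : Vec n) :
    (N x).mulVecLin (krylov N v i x) = krylov N v (i + 1) x := rfl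

lemma smooth_krylov {n : ℕ} {N : OpField n} (hN : SmoothOp N) (v : Vec n) (i : ℕ) :
    SmoothVF (krylov N v i) := by
  induction i with
  | zero => exact contDiff_const
  | succ i ih => exact ih.app hN

lemma nilp_apply {n : ℕ} {A : Matrix (Fin n) (Fin n) ℝ} (h : A ^ 4 = 0) (u : Vec n) :
    A.mulVecLin (A.mulVecLin (A.mulVecLin (A.mulVecLin u))) = 0 := by
  simp only [Matrix.mulVecLin_apply, Matrix.mulVec_mulVec]
  have : A * (A * (A * A)) = A ^ 4 := by simp only [pow_succ', pow_zero, mul_one]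
  simp [← Matrix.mul_assoc] at this ⊢
  rw [this, h, Matrix.zero_mulVec]

lemma krylov_add_four {n : ℕ} {N : OpField n} (h : ∀ x, N x ^ 4 = 0) (v : Vec n) (i : ℕ) :
    krylov N v (i + 4) = 0 :=
  funext fun x => nilp_apply (h x) _

lemma lieB_antisymm {n : ℕ} (ξ η : VF n) (x : Vec n) : lieB ξ η x = -lieB η ξ x := by
  simp [lieB]

/-- At a point where `v` is a cyclic vector, `Ttensor` vanishes if and only if the brackets of the
fields generated by `v` lie in the kernels of the appropriate powers of the nilpotent part. -/
lemma Ttensor_eq_zero_iff {L : OpField 4} (hL : SmoothOp L)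
    (hnil : ∀ x, tracelessPart4 L x ^ 4 = 0) (x v : Vec 4)
    (hv : krylov (tracelessPart4 L) v 3 x ≠ 0) :
    (∀ ξ η : VF 4, SmoothVF ξ → SmoothVF η → Ttensor L ξ η x = 0) ↔
      ((tracelessPart4 L x).mulVecLin ^ 3) (lieB (krylov (tracelessPart4 L) v 1)
        (krylov (tracelessPart4 L) v 2) x) = 0 ∧
      ((tracelessPart4 L x).mulVecLin ^ 3) (lieB (krylov (tracelessPart4 L) v 1)
        (krylov (tracelessPart4 L) v 3) x) = 0 ∧
      ((tracelessPart4 L x).mulVecLin ^ 2) (lieB (krylov (tracelessPart4 L) v 2)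
        (krylov (tracelessPart4 L) v 3) x) = 0 := by
  have hN := hL.tracelessPart4
  set N := tracelessPart4 L with hNdef
  set Y := krylov N v
  have hYs : ∀ i, SmoothVF (Y i) := smooth_krylov hN v
  have hY4 : ∀ i, Y (i + 4) = 0 := krylov_add_four hnil v
  have key := contractForm_cyclic_eq_zero_iff (N := (N x).mulVecLin)
    (S := nijForm (N x).mulVecLin (dOp N x)) (Y := fun i => Y i x)
    (b := fun i j => lieB (Y i) (Y j) x) (fun i => rfl)
    (fun i j => by rw [← nijTor_apply hN (hYs i) (hYs j)]; rfl)
    (nilp_apply (hnil x)) (fun i j => lieB_antisymm _ _ x)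
    (fun i j => by
      simp only [hY4]
      simp [lieB])
  have e3 : ∀ (A : Vec 4 →ₗ[ℝ] Vec 4) u, (A ^ 3) u = A (A (A u)) := fun _ _ => rfl
  have e2 : ∀ (A : Vec 4 →ₗ[ℝ] Vec 4) u, (A ^ 2) u = A (A u) := fun _ _ => rfl
  rw [e3, e3, e2, ← key]
  constructor
  · intro h i _ j _
    rw [← Ttensor_apply hL (hYs i) (hYs j)]
    exact h _ _ (hYs i) (hYs j)
  · intro h ξ η hξ hη
    rw [Ttensor_apply hL hξ hη]
    have hli : LinearIndependent ℝ fun j : Fin 4 => Y (3 - j) x := by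
      rw [Fintype.linearIndependent_iff]
      intro c hc j
      exact cyclic_coord (N := (N x).mulVecLin) (Y := fun i => Y i x) (fun i => rfl)
        (fun i => by rw [hY4]; rfl) hv c 0 hc j (Nat.zero_le _)
    let B := basisOfLinearIndependentOfCardEqFinrank hli (by simp)
    have hB : ∀ j, B j = Y (3 - j) x := fun j => by simp [B]
    have h0 : contractForm (N x).mulVecLin (haantjesStep (N x).mulVecLin
        (nijForm (N x).mulVecLin (dOp N x))) = 0 := by
      refine B.ext fun i => B.ext fun j => ?_
      rw [hB, hB]
      exact h _ (by omega) _ (by omega)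
    rw [← hNdef, h0]
    rfl

end CyclicFrame

/-! ### Triangular coordinates imply involutivity -/

section Forward
variable {n : ℕ}

lemma jacobianMatrix_mulVec (f : VF n) (x u : Vec n) :
    jacobianMatrix f x *ᵥ u = fderiv ℝ f x u := by
  have : jacobianMatrix f x = LinearMap.toMatrix' (fderiv ℝ f x).toLinearMap := by
    ext i j
    simp [jacobianMatrix, LinearMap.toMatrix'_apply]
  rw [this, LinearMap.toMatrix'_mulVec]
  rfl

/-- The Jacobian matrices of mutually inverse maps are inverse to each other. -/
lemma jacobianMatrix_mul_eq_one {φ ψ : VF n} {U : Set (Vec n)} (hU : IsOpen U)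
    (hinv : ∀ x ∈ U, ψ (φ x) = x) {x : Vec n} (hx : x ∈ U) (hφ : DifferentiableAt ℝ φ x)
    (hψ : DifferentiableAt ℝ ψ (φ x)) :
    jacobianMatrix ψ (φ x) * jacobianMatrix φ x = 1 := by
  have h1 := hψ.hasFDerivAt.comp x hφ.hasFDerivAt
  have h2 : HasFDerivAt (ψ ∘ φ) (ContinuousLinearMap.id ℝ (Vec n)) x := by
    refine (hasFDerivAt_id x).congr_of_eventuallyEq ?_
    filter_upwards [hU.mem_nhds hx] with y hy using hinv y hy
  apply Matrix.ext_of_mulVec_single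
  intro j
  rw [← Matrix.mulVec_mulVec, jacobianMatrix_mulVec, jacobianMatrix_mulVec, Matrix.one_mulVec]
  exact congrArg (fun A : Vec n →L[ℝ] Vec n => A (Pi.single j 1)) (h1.unique h2)

lemma UpperTri.mul_diag {A B : Matrix (Fin n) (Fin n) ℝ} (hA : UpperTri A) (hB : UpperTri B) :
    UpperTri (A * B) ∧ ∀ i, (A * B) i i = A i i * B i i := by
  refine ⟨fun i j hji => ?_, fun i => ?_⟩
  · rw [Matrix.mul_apply]
    refine Finset.sum_eq_zero fun k _ => ?_
    rcases lt_or_ge k i with hk | hk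
    · rw [hA i k hk, zero_mul]
    · rw [hB k j (hji.trans_le hk), mul_zero]
  · rw [Matrix.mul_apply]
    refine Finset.sum_eq_single i (fun k _ hk => ?_) (by simp)
    rcases lt_or_gt_of_ne hk with hk | hk
    · rw [hA i k hk, zero_mul]
    · rw [hB k i hk, mul_zero]

/-- A nilpotent upper triangular matrix is strictly upper triangular. -/
lemma UpperTri.strict {A : Matrix (Fin n) (Fin n) ℝ} (hA : UpperTri A) (h : A ^ 4 = 0) :
    StrictUpperTri A := by
  have h2 := hA.mul_diag hA
  have h4 := h2.1.mul_diag h2.1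
  have e : A * A * (A * A) = A ^ 4 := by simp only [pow_succ, pow_zero, one_mul, mul_assoc]
  intro i j hij
  rcases hij.lt_or_eq with hij | rfl
  · exact hA i j hij
  · have := h4.2 j
    rw [e, h, h2.2] at this
    simpa using this

/-- A strictly upper triangular matrix lowers by one the index of the last nonzero component. -/
lemma StrictUpperTri.mulVec_shift {M : Matrix (Fin n) (Fin n) ℝ} (hM : StrictUpperTri M)
    {m a : ℕ} {u : Vec n} (hu : ∀ r : Fin n, m ≤ r + a → u r = 0) (r : Fin n)
    (hr : m ≤ r + (a + 1)) : (M *ᵥ u) r = 0 := by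
  show ∑ s, M r s * u s = 0
  refine Finset.sum_eq_zero fun s _ => ?_
  rcases le_or_gt s r with hs | hs
  · rw [hM r s hs, zero_mul]
  · have : (r : ℕ) < s := hs
    rw [hu s (by omega), mul_zero]

/-- If both `Y` and `Z` are tangent to the level sets of a function `f`, so is their bracket. -/
lemma fderiv_lieB_eq_zero {f : Vec n → ℝ} {x : Vec n} (hf : ContDiffAt ℝ ∞ f x) {Y Z : VF n}
    (hY : DifferentiableAt ℝ Y x) (hZ : DifferentiableAt ℝ Z x)
    (hfY : ∀ᶠ y in 𝓝 x, fderiv ℝ f y (Y y) = 0) (hfZ : ∀ᶠ y in 𝓝 x, fderiv ℝ f y (Z y) = 0) :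
    fderiv ℝ f x (lieB Y Z x) = 0 := by
  have hD : HasFDerivAt (fderiv ℝ f) (fderiv ℝ (fderiv ℝ f) x) x :=
    ((hf.fderiv_right (m := ∞) (by simp)).differentiableAt (by simp)).hasFDerivAt
  have hsymm : IsSymmSndFDerivAt ℝ f x := hf.isSymmSndFDerivAt (by
      rw [minSmoothness_of_isRCLikeNormedField]
      exact WithTop.coe_le_coe.2 (le_top (a := (2 : ℕ∞))))
  have key : ∀ {Y : VF n}, DifferentiableAt ℝ Y x → (∀ᶠ y in 𝓝 x, fderiv ℝ f y (Y y) = 0) →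
      ∀ w, fderiv ℝ f x (fderiv ℝ Y x w) = -fderiv ℝ (fderiv ℝ f) x w (Y x) := by
    intro Y hY h w
    have h1 := hD.clm_apply hY.hasFDerivAt
    have h2 : HasFDerivAt (fun y => fderiv ℝ f y (Y y)) (0 : Vec n →L[ℝ] ℝ) x :=
      (hasFDerivAt_const (0 : ℝ) x).congr_of_eventuallyEq h
    have h3 := congrArg (fun A : Vec n →L[ℝ] ℝ => A w) (h1.unique h2)
    exact eq_neg_of_add_eq_zero_left h3
  rw [lieB, map_sub, key hZ hfZ, key hY hfY, hsymm (Y x) (Z x)]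
  ring

/-- In triangularising coordinates the kernels of the powers of the nilpotent part are spanned by
the first coordinate fields, hence are involutive. -/
lemma LocallyReducible.pow_lieB_eq_zero {L : OpField 4} (hL : SmoothOp L)
    (hnil : ∀ x, tracelessPart4 L x ^ 4 = 0) {x : Vec 4} (h : LocallyReducible L x UpperTri)
    (v : Vec 4) (a b k : ℕ) (ha : 4 ≤ a + k) (hb : 4 ≤ b + k) :
    ((tracelessPart4 L x).mulVecLin ^ k) (lieB (krylov (tracelessPart4 L) v a)
      (krylov (tracelessPart4 L) v b) x) = 0 := by
  have hN := hL.tracelessPart4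
  set N := tracelessPart4 L with hNdef
  set Y := krylov N v
  obtain ⟨U, hU, hxU, φ, ψ, hφ, hφU, hψ, hψφ, hφψ, hP⟩ := h
  have hφd : ∀ y ∈ U, ContDiffAt ℝ ∞ φ y := fun y hy => hφ.contDiffAt (hU.mem_nhds hy)
  have hφd' : ∀ y ∈ U, DifferentiableAt ℝ φ y := fun y hy => (hφd y hy).differentiableAt (by simp)
  have hinv : ∀ y ∈ U, jacobianMatrix ψ (φ y) * jacobianMatrix φ y = 1 := fun y hy =>
    jacobianMatrix_mul_eq_one hU hψφ hy (hφd' y hy) ((hψ.contDiffAt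
      (hφU.mem_nhds (mem_image_of_mem φ hy))).differentiableAt (by simp))
  let M : Vec 4 → Matrix (Fin 4) (Fin 4) ℝ := fun y =>
    jacobianMatrix φ y * N y * jacobianMatrix ψ (φ y)
  have hMφ : ∀ y ∈ U, SemiconjBy (jacobianMatrix φ y) (N y) (M y) := by
    intro y hy
    show _ = jacobianMatrix φ y * N y * jacobianMatrix ψ (φ y) * jacobianMatrix φ y
    rw [mul_assoc _ (jacobianMatrix ψ (φ y)), hinv y hy, mul_one]
  have hM : ∀ y ∈ U, StrictUpperTri (M y) := by
    intro y hy
    refine UpperTri.strict ?_ ?_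
    · have h1 := hP (φ y) (mem_image_of_mem φ hy)
      rw [hψφ y hy] at h1
      have h2 : M y = jacobianMatrix φ y * L y * jacobianMatrix ψ (φ y) -
          ((L y).trace / 4) • (1 : Matrix (Fin 4) (Fin 4) ℝ) := by
        simp only [M, hNdef, tracelessPart4, mul_sub, sub_mul, Matrix.mul_smul, Matrix.smul_mul,
          mul_one, mul_eq_one_comm.1 (hinv y hy)]
      intro i j hij
      rw [h2, Matrix.sub_apply, h1 i j hij, Matrix.smul_apply, Matrix.one_apply_ne hij.ne']
      simp
    · have h1 := (hMφ y hy).pow_right 4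
      rw [hnil y, SemiconjBy, mul_zero] at h1
      rw [← mul_one (M y ^ 4), ← mul_eq_one_comm.1 (hinv y hy), ← mul_assoc, ← h1, zero_mul]
  -- transport of the nilpotent part: components shift by one
  have hshift : ∀ y ∈ U, ∀ (m i : ℕ) (u : Vec 4),
      (∀ r : Fin 4, m ≤ r + i → fderiv ℝ φ y u r = 0) →
      ∀ r : Fin 4, m ≤ r + (i + 1) → fderiv ℝ φ y ((N y).mulVecLin u) r = 0 := by
    intro y hy m i u hu r hr
    have := congrArg (fun A => A *ᵥ u) (hMφ y hy)
    simp only [← Matrix.mulVec_mulVec, jacobianMatrix_mulVec] at this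
    rw [Matrix.mulVecLin_apply, this]
    exact (hM y hy).mulVec_shift hu r hr
  have hYφ : ∀ i : ℕ, ∀ y ∈ U, ∀ r : Fin 4, 4 ≤ r + i → fderiv ℝ φ y (Y i y) r = 0 := by
    intro i
    induction i with
    | zero => intro y _ r hr; omega
    | succ i ih => exact fun y hy r hr => hshift y hy 4 i _ (ih y hy) r hr
  have hcomp : ∀ r, ∀ y ∈ U, ∀ u, fderiv ℝ (fun z => φ z r) y u = fderiv ℝ φ y u r := by
    intro r y hy u
    have := (hasFDerivAt_pi'.1 (hφd' y hy).hasFDerivAt) r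
    rw [this.fderiv]
    rfl
  have hbr : ∀ r : Fin 4, k ≤ r → fderiv ℝ φ x (lieB (Y a) (Y b) x) r = 0 := by
    intro r hr
    rw [← hcomp r x hxU]
    refine fderiv_lieB_eq_zero (contDiffAt_pi.1 (hφd x hxU) r)
      ((smooth_krylov hN v a).differentiableAt x) ((smooth_krylov hN v b).differentiableAt x) ?_ ?_
    · filter_upwards [hU.mem_nhds hxU] with y hy
      rw [hcomp r y hy]
      exact hYφ a y hy r (by omega)
    · filter_upwards [hU.mem_nhds hxU] with y hy
      rw [hcomp r y hy]
      exact hYφ b y hy r (by omega)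
  have hpow : ∀ i : ℕ, ∀ r : Fin 4, k ≤ r + i →
      fderiv ℝ φ x (((N x).mulVecLin ^ i) (lieB (Y a) (Y b) x)) r = 0 := by
    intro i
    induction i with
    | zero => exact fun r hr => hbr r hr
    | succ i ih =>
      intro r hr
      rw [pow_succ', Module.End.mul_apply]
      exact hshift x hxU k i _ ih r hr
  have h0 : fderiv ℝ φ x (((N x).mulVecLin ^ k) (lieB (Y a) (Y b) x)) = 0 :=
    funext fun r => hpow k r (by omega)
  rw [← jacobianMatrix_mulVec] at h0
  rw [← Matrix.one_mulVec (((N x).mulVecLin ^ k) _), ← hinv x hxU, ← Matrix.mulVec_mulVec, h0,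
    Matrix.mulVec_zero]

end Forward

/-! ### Involutivity implies triangular coordinates -/

section Backward

/-- The frame `N³ v, N² v, N v, v` generated by a constant vector `v`; the span of its first `k`
members is the kernel of `N ^ k` wherever `N ^ 4 = 0` and `N ^ 3 v ≠ 0`. -/
def cyclicFrame (N : OpField 4) (v : Vec 4) (j : Fin 4) : VF 4 := krylov N v (3 - j)

/-- The linear map sending the standard basis to `cyclicFrame N v` at the point `x`. -/
noncomputable def cyclicMap (N : OpField 4) (v x : Vec 4) : Vec 4 →L[ℝ] Vec 4 :=
  ∑ j, (ContinuousLinearMap.proj (R := ℝ) (φ := fun _ : Fin 4 => ℝ) j).smulRight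
    (cyclicFrame N v j x)

lemma cyclicMap_apply (N : OpField 4) (v x c : Vec 4) :
    cyclicMap N v x c = ∑ j, c j • cyclicFrame N v j x := by
  simp [cyclicMap]

lemma cyclicMap_single (N : OpField 4) (v x : Vec 4) (j : Fin 4) :
    cyclicMap N v x (Pi.single j 1) = cyclicFrame N v j x := by
  simp [cyclicMap_apply, Pi.single_apply]

lemma cyclicFrame_coord {N : OpField 4} (hnil : ∀ x, N x ^ 4 = 0) {v x : Vec 4}
    (hv : krylov N v 3 x ≠ 0) (c : Vec 4) (r : ℕ)
    (h : ((N x).mulVecLin ^ r) (∑ j, c j • cyclicFrame N v j x) = 0) (j : Fin 4) (hj : r ≤ j) :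
    c j = 0 :=
  cyclic_coord (N := (N x).mulVecLin) (Y := fun i => krylov N v i x) (fun _ => rfl)
    (fun i => by rw [krylov_add_four hnil]; rfl) hv c r h j hj

lemma exists_equiv_cyclicMap {N : OpField 4} (hnil : ∀ x, N x ^ 4 = 0) {v x : Vec 4}
    (hv : krylov N v 3 x ≠ 0) :
    ∃ e : Vec 4 ≃L[ℝ] Vec 4, (e : Vec 4 →L[ℝ] Vec 4) = cyclicMap N v x := by
  have hinj : Function.Injective (cyclicMap N v x).toLinearMap := by
    rw [← LinearMap.ker_eq_bot, LinearMap.ker_eq_bot']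
    intro c hc
    have hc' : cyclicMap N v x c = 0 := hc
    rw [cyclicMap_apply] at hc'
    exact funext fun j => cyclicFrame_coord hnil hv c 0 hc' j (Nat.zero_le _)
  refine ⟨(LinearEquiv.ofInjectiveEndo _ hinj).toContinuousLinearEquiv, ?_⟩
  ext1 c
  rfl

lemma isFrameOn_cyclicFrame {N : OpField 4} (hN : SmoothOp N) (hnil : ∀ x, N x ^ 4 = 0)
    (v : Vec 4) :
    IsFrameOn (cyclicFrame N v) (fun x => ContinuousLinearMap.inverse (cyclicMap N v x))
      {x | krylov N v 3 x ≠ 0} where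
  isOpen := isOpen_ne_fun (smooth_krylov hN v 3).continuous continuous_const
  smooth j := smooth_krylov hN v _
  smooth_dual := by
    intro x hx
    obtain ⟨e, he⟩ := exists_equiv_cyclicMap hnil hx
    refine ContDiffAt.contDiffWithinAt ?_
    have hs : ContDiff ℝ ∞ (cyclicMap N v) := by
      refine ContDiff.sum fun j _ => ?_
      exact contDiff_const.smulRight (smooth_krylov hN v _)
    have hi : ContDiffAt ℝ ∞ (ContinuousLinearMap.inverse : (Vec 4 →L[ℝ] Vec 4) → _)
        (cyclicMap N v x) := by
      rw [← he]
      exact contDiffAt_map_inverse e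
    exact hi.comp x hs.contDiffAt
  dual_apply := by
    intro x hx j
    obtain ⟨e, he⟩ := exists_equiv_cyclicMap hnil hx
    simp only [← he, ContinuousLinearMap.inverse_equiv]
    rw [← cyclicMap_single, ← he]
    exact e.symm_apply_apply _
  sum_dual := by
    intro x hx w
    obtain ⟨e, he⟩ := exists_equiv_cyclicMap hnil hx
    rw [← cyclicMap_apply]
    simp only [← he, ContinuousLinearMap.inverse_equiv]
    exact e.apply_symm_apply w

/-- If `T` vanishes then the span of the first `r` fields of the frame, the kernel of `N ^ r`, is
involutive. -/
lemma pow_lieB_cyclicFrame {L : OpField 4} (hL : SmoothOp L)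
    (hnil : ∀ x, tracelessPart4 L x ^ 4 = 0) {v x : Vec 4}
    (hv : krylov (tracelessPart4 L) v 3 x ≠ 0)
    (hT : ∀ ξ η : VF 4, SmoothVF ξ → SmoothVF η → Ttensor L ξ η x = 0) (i j r : Fin 4)
    (hi : i < r) (hj : j < r) :
    ((tracelessPart4 L x).mulVecLin ^ (r : ℕ)) (lieB (cyclicFrame (tracelessPart4 L) v i)
      (cyclicFrame (tracelessPart4 L) v j) x) = 0 := by
  obtain ⟨h12, h13, h23⟩ := (Ttensor_eq_zero_iff hL hnil x v hv).1 hT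
  -- by antisymmetry it is enough to treat `i < j`
  wlog hij : i < j generalizing i j
  · rcases (not_lt.1 hij).lt_or_eq with h | rfl
    · rw [lieB_antisymm, map_neg, this j i hj hi h, neg_zero]
    · simp [lieB]
  have h23' : ((tracelessPart4 L x).mulVecLin ^ 3) (lieB (krylov (tracelessPart4 L) v 2)
      (krylov (tracelessPart4 L) v 3) x) = 0 := by
    rw [pow_succ', Module.End.mul_apply, h23, map_zero]
  fin_cases r <;> fin_cases i <;> fin_cases j <;>
    first
      | exact absurd hij (by decide)
      | exact absurd hj (by decide)
      | skip
  all_goals rw [lieB_antisymm, map_neg, neg_eq_zero]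
  exacts [h23, h23', h13, h12]

/-- The matrix of `N` in the frame is upper triangular, since `N` maps each member of the frame to the
preceding one and the first member to `0`. -/
lemma upperTri_dual_mul_frame {N : OpField 4} (hnil : ∀ x, N x ^ 4 = 0) {v x : Vec 4}
    {F : Vec 4 → Vec 4 →L[ℝ] Vec 4} {O : Set (Vec 4)} (h : IsFrameOn (cyclicFrame N v) F O)
    (hx : x ∈ O) (r j : Fin 4) (hjr : j < r) :
    F x ((N x).mulVecLin (cyclicFrame N v j x)) r = 0 := by
  rw [cyclicFrame, krylov_succ]
  by_cases hj : j = 0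
  · subst hj
    rw [show krylov N v (3 - ((0 : Fin 4) : ℕ) + 1) = 0 from krylov_add_four hnil v 0]
    simp
  · have hj0 : (j : ℕ) ≠ 0 := fun e => hj (Fin.ext e)
    have hjr' : (j : ℕ) < r := hjr
    have e : krylov N v (3 - (j : ℕ) + 1) = cyclicFrame N v ⟨j - 1, by omega⟩ := by
      rw [cyclicFrame]
      congr 1
      simp only
      omega
    rw [e, h.dual_apply x hx, Pi.single_apply, if_neg]
    intro e
    have : (r : ℕ) = j - 1 := congrArg Fin.val e
    omega

/-- An operator that is upper triangular in a frame is upper triangular in any coordinates whose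
coordinate fields are triangular with respect to that frame. -/
lemma upperTri_conj {n : ℕ} {A P Q E D : Matrix (Fin n) (Fin n) ℝ} (hPQ : P * Q = 1)
    (hDE : D * E = 1) (hA : UpperTri (D * A * E)) (hQ : UpperTri (D * Q)) :
    UpperTri (P * A * Q) := by
  have hED := mul_eq_one_comm.1 hDE
  have hinv : P * E * (D * Q) = 1 := by
    rw [mul_assoc, ← mul_assoc E, hED, one_mul, hPQ]
  have hPE : UpperTri (P * E) := by
    have hQ' : (D * Q).BlockTriangular id := hQ
    have hu : Invertible (D * Q) := invertibleOfLeftInverse _ _ hinv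
    have := Matrix.blockTriangular_inv_of_blockTriangular hQ'
    rw [Matrix.inv_eq_left_inv hinv] at this
    exact this
  have e : P * A * Q = P * E * (D * A * E) * (D * Q) := by
    simp only [mul_assoc]
    rw [← mul_assoc E D, hED, one_mul, ← mul_assoc E D, hED, one_mul]
  rw [e]
  exact ((hPE.mul_diag hA).1.mul_diag hQ).1

/-- The parametrisation `g` that straightens the flag of kernels `ker N ^ k` is the inverse of the
coordinates in which `L` is upper triangular. -/
lemma locallyReducible_of_Ttensor {L : OpField 4} (hL : SmoothOp L)
    (hnil : ∀ x, tracelessPart4 L x ^ 4 = 0) {v p : Vec 4}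
    (hv : krylov (tracelessPart4 L) v 3 p ≠ 0)
    (hT : ∀ ξ η : VF 4, SmoothVF ξ → SmoothVF η → ∀ x, Ttensor L ξ η x = 0) :
    LocallyReducible L p UpperTri := by
  have hN := hL.tracelessPart4
  have hfr := isFrameOn_cyclicFrame hN hnil v
  set X := cyclicFrame (tracelessPart4 L) v with hX
  set O := {x | krylov (tracelessPart4 L) v 3 x ≠ 0} with hO
  set F : Vec 4 → Vec 4 →L[ℝ] Vec 4 :=
    fun x => ContinuousLinearMap.inverse (cyclicMap (tracelessPart4 L) v x) with hF
  have hst : StraightFrom X F O p 0 := by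
    refine hfr.straighten (fun z hz i j r hi hj => ?_) hv
    refine cyclicFrame_coord hnil hz _ r ?_ r le_rfl
    rw [hfr.sum_dual z hz]
    exact pow_lieB_cyclicFrame hL hnil hz (fun ξ η hξ hη => hT ξ η hξ hη z) i j r hi hj
  obtain ⟨g, W, hW, h0W, hg, hg0, hgO, -, htri, hDg⟩ := hst
  have hgd : ∀ y ∈ W, DifferentiableAt ℝ g y := fun y hy =>
    (hg.contDiffAt (hW.mem_nhds hy)).differentiableAt (by simp)
  -- at the origin the derivative of `g` maps the standard basis to the frame at `p`
  obtain ⟨e, he⟩ := exists_equiv_cyclicMap hnil hv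
  have hg' : HasFDerivAt g (e : Vec 4 →L[ℝ] Vec 4) 0 := by
    have : fderiv ℝ g 0 = (e : Vec 4 →L[ℝ] Vec 4) := by
      rw [he]
      refine ContinuousLinearMap.coe_injective (LinearMap.pi_ext' fun j => ?_)
      ext1
      simpa [cyclicMap_single] using hDg j (Nat.zero_le _)
    rw [← this]
    exact (hgd 0 h0W).hasFDerivAt
  obtain ⟨s, U, hU, h0U, hUW, hgU, hs, hsg⟩ :=
    exists_smooth_local_inverse g W hW hg 0 h0W e hg'
  have hsU : s '' (g '' U) = U := by
    rw [← image_comp]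
    exact (image_congr fun y hy => hsg y hy).trans (image_id' U)
  refine ⟨g '' U, hgU, ⟨0, h0U, hg0⟩, s, g, hs, ?_, ?_, ?_, ?_, ?_⟩
  · rwa [hsU]
  · rw [hsU]
    exact hg.mono hUW
  · rintro _ ⟨y, hy, rfl⟩
    rw [hsg y hy]
  · rw [hsU]
    exact hsg
  · rw [hsU]
    intro y hy
    have hyW := hUW hy
    have hyO := hgO y hyW
    have hPQ : jacobianMatrix s (g y) * jacobianMatrix g y = 1 :=
      jacobianMatrix_mul_eq_one hU hsg hy (hgd y hyW) ((hs.contDiffAt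
        (hgU.mem_nhds (mem_image_of_mem g hy))).differentiableAt (by simp))
    have hcol : ∀ (D M : Matrix (Fin 4) (Fin 4) ℝ) r j,
        (D * M) r j = (D *ᵥ (M *ᵥ Pi.single j 1)) r := by
      intro D M r j
      rw [Matrix.mulVec_mulVec, Matrix.mulVec_single_one]
      rfl
    have hD : ∀ u, LinearMap.toMatrix' (F (g y)).toLinearMap *ᵥ u = F (g y) u := fun u =>
      LinearMap.toMatrix'_mulVec _ _
    let E : Matrix (Fin 4) (Fin 4) ℝ := Matrix.of fun i j => X j (g y) i
    have hE : ∀ j, E *ᵥ Pi.single j 1 = X j (g y) := by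
      intro j
      rw [Matrix.mulVec_single_one]
      rfl
    refine upperTri_conj (E := E) (D := LinearMap.toMatrix' (F (g y)).toLinearMap) hPQ ?_ ?_ ?_
    · apply Matrix.ext_of_mulVec_single
      intro j
      rw [← Matrix.mulVec_mulVec, hE, hD, hfr.dual_apply _ hyO, Matrix.one_mulVec]
    · intro r j hjr
      have hLN : L (g y) *ᵥ X j (g y) = (tracelessPart4 L (g y)).mulVecLin (X j (g y)) +
          ((L (g y)).trace / 4) • X j (g y) := by
        rw [Matrix.mulVecLin_apply, tracelessPart4, Matrix.sub_mulVec, Matrix.smul_mulVec,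
          Matrix.one_mulVec, sub_add_cancel]
      rw [mul_assoc, hcol, ← Matrix.mulVec_mulVec, hE, hD, hLN, map_add, map_smul, Pi.add_apply,
        upperTri_dual_mul_frame hnil hfr hyO r j hjr, Pi.smul_apply, hfr.dual_apply _ hyO,
        Pi.single_eq_of_ne hjr.ne', smul_zero, zero_add]
    · intro r j hjr
      rw [hcol, jacobianMatrix_mulVec, hD]
      exact htri y hyW j r hjr

end Backward

/-- in dimension 4, for an operator field similar at each point to a
single Jordan block, local upper-triangularizability is equivalent to the
vanishing of the tensor `T` built from the Haantjes torsion and the traceless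
part of `L`. -/
theorem stmt_1 (L : OpField 4) (hL : SmoothOp L)
    (hJordan : ∀ x : Vec 4, ∃ lam : ℝ,
      (L x).charpoly = (Polynomial.X - Polynomial.C lam) ^ 4 ∧
      (L x - lam • (1 : Matrix (Fin 4) (Fin 4) ℝ)).rank = 3) :
    (∀ p : Vec 4, LocallyReducible L p UpperTri) ↔
      (∀ ξ η : VF 4, SmoothVF ξ → SmoothVF η →
        ∀ x : Vec 4, Ttensor L ξ η x = 0) := by
  have hnil : ∀ x, tracelessPart4 L x ^ 4 = 0 := by
    intro x
    obtain ⟨lam, h1, -⟩ := hJordan x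
    obtain ⟨h2, h3⟩ := jordan_traceless h1
    rw [tracelessPart4, h2, h3]
  have hcyc : ∀ x, ∃ v, krylov (tracelessPart4 L) v 3 x ≠ 0 := by
    intro x
    obtain ⟨lam, h1, h4⟩ := hJordan x
    obtain ⟨v, hv⟩ := exists_cube_ne_zero _ h4
    refine ⟨v, ?_⟩
    have : tracelessPart4 L x = L x - lam • (1 : Matrix (Fin 4) (Fin 4) ℝ) := by
      rw [tracelessPart4, (jordan_traceless h1).1]
    rwa [← this] at hv
  constructor
  · intro h ξ η hξ hη x
    obtain ⟨v, hv⟩ := hcyc x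
    have hb := (h x).pow_lieB_eq_zero hL hnil v
    exact (Ttensor_eq_zero_iff hL hnil x v hv).2
      ⟨hb 1 2 3 (by simp) (by simp), hb 1 3 3 (by simp) (by simp),
        hb 2 3 2 (by simp) (by simp)⟩ ξ η hξ hη
  · intro h p
    obtain ⟨v, hv⟩ := hcyc p
    exact locallyReducible_of_Ttensor hL hnil hv h
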